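/- arXiv:2006.15944 — 5 statements merged into one kernel-verified Lean document; each statement's English description precedes it below -/
import Mathlib

section
/- Let N ≥ 3 be an integer, let 0 < α < 4/(N−2), and set α₀ = 4/(N−4+2√(N−1)), β = (2/α)(N−2−2/α), and Λ = (1/α − (N−2)/4)² − ((N−2)/2 − 1/α). Then the following three conditions are equivalent: (1) α < α₀; (2) Λ > 0; (3) β(α+1) < (N−2)²/4. -/
/-!
As a polynomial in `x = 1 / α`, the quantity `Λ` has the roots `(N - 4 ± 2√(N - 1)) / 4`. The larger
one is `1 / α₀`, and the bound on `α` keeps `x` above the smaller one, so `Λ > 0` exactly when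
`x > 1 / α₀`. Condition (3) is `Λ > 0` rewritten, because `(N - 2)² / 4 - β (α + 1) = 4 Λ`.
-/

lemma mul_sub_pos_iff_of_le {R : Type*} [Ring R] [LinearOrder R] [IsStrictOrderedRing R]
    {a b x : R} (hab : a ≤ b) (hax : a ≤ x) : 0 < (x - b) * (x - a) ↔ b < x :=
  ⟨fun h ↦ sub_pos.mp (pos_of_mul_pos_left h (sub_nonneg.mpr hax)),
    fun h ↦ mul_pos (sub_pos.mpr h) (sub_pos.mpr (hab.trans_lt h))⟩

/-- The threshold exponent `α₀` in dimension `n`. Like the other two quantities below, it is defined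
for real `n`. -/
noncomputable def thresholdExponent (n : ℝ) : ℝ :=
  4 / (n - 4 + 2 * √(n - 1))

/-- The number `β` for which `β ^ (1 / α) * |x| ^ (-2 / α)` is the singular radial solution of
`-Δu = |u| ^ α * u` in dimension `n`, when `β` is positive. -/
noncomputable def singularCoeff (n α : ℝ) : ℝ :=
  2 / α * (n - 2 - 2 / α)

/-- The number `Λ`: one sixteenth of the discriminant of the indicial equation
`z ^ 2 + (n - 2 - 4 / α) * z + α * β = 0`, where `β` is `singularCoeff n α`. This equation governs
the linearization of `-Δu = |u| ^ α * u` at the singular solution. -/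
noncomputable def indicialDiscrim (n α : ℝ) : ℝ :=
  (1 / α - (n - 2) / 4) ^ 2 - ((n - 2) / 2 - 1 / α)

section

variable {n α : ℝ}

lemma indicialDiscrim_eq_mul (hn : 1 ≤ n) :
    indicialDiscrim n α =
      (1 / α - (n - 4 + 2 * √(n - 1)) / 4) * (1 / α - (n - 4 - 2 * √(n - 1)) / 4) := by
  have sq_sqrt_sub_one : √(n - 1) ^ 2 = n - 1 := Real.sq_sqrt (sub_nonneg.mpr hn)
  rw [indicialDiscrim]
  linear_combination (1 / 4) * sq_sqrt_sub_one

lemma indicialDiscrim_pos_iff_mul_lt_four (hn : 1 ≤ n) (hα : 0 < α)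
    (hαn : α * (n - 4 - 2 * √(n - 1)) ≤ 4) :
    0 < indicialDiscrim n α ↔ α * (n - 4 + 2 * √(n - 1)) < 4 := by
  have roots_le : (n - 4 - 2 * √(n - 1)) / 4 ≤ (n - 4 + 2 * √(n - 1)) / 4 := by
    linarith [Real.sqrt_nonneg (n - 1)]
  have smaller_root_le : (n - 4 - 2 * √(n - 1)) / 4 ≤ 1 / α := by
    rwa [div_le_div_iff₀ four_pos hα, one_mul, mul_comm]
  rw [indicialDiscrim_eq_mul hn, mul_sub_pos_iff_of_le roots_le smaller_root_le,
    div_lt_div_iff₀ four_pos hα, one_mul, mul_comm]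

lemma lt_thresholdExponent_iff_mul_lt_four (hn : 2 < n) :
    α < thresholdExponent n ↔ α * (n - 4 + 2 * √(n - 1)) < 4 := by
  have one_lt_sqrt : 1 < √(n - 1) := by
    rw [Real.lt_sqrt zero_le_one]
    linarith
  exact lt_div_iff₀ (by linarith)

lemma sub_singularCoeff_mul_eq_four_mul_indicialDiscrim (hα : α ≠ 0) :
    (n - 2) ^ 2 / 4 - singularCoeff n α * (α + 1) = 4 * indicialDiscrim n α := by
  rw [singularCoeff, indicialDiscrim]
  field_simp
  ring

lemma indicialDiscrim_pos_iff_singularCoeff_mul_lt (hα : α ≠ 0) :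
    0 < indicialDiscrim n α ↔ singularCoeff n α * (α + 1) < (n - 2) ^ 2 / 4 := by
  rw [← sub_pos (b := singularCoeff n α * (α + 1)),
    sub_singularCoeff_mul_eq_four_mul_indicialDiscrim hα, mul_pos_iff_of_pos_left four_pos]

lemma mul_sub_four_sub_two_mul_sqrt_le_four (hn : 2 < n) (hα : 0 < α) (hα4 : α < 4 / (n - 2)) :
    α * (n - 4 - 2 * √(n - 1)) ≤ 4 :=
  calc
    α * (n - 4 - 2 * √(n - 1)) ≤ α * (n - 2) :=
      mul_le_mul_of_nonneg_left (by linarith [Real.sqrt_nonneg (n - 1)]) hα.le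
    _ ≤ 4 := ((lt_div_iff₀ (sub_pos.mpr hn)).mp hα4).le

theorem stmt_5_general (hn : 2 < n) (hα : 0 < α) (hαn : α * (n - 4 - 2 * √(n - 1)) ≤ 4) :
    (α < thresholdExponent n ↔ 0 < indicialDiscrim n α) ∧
      (0 < indicialDiscrim n α ↔ singularCoeff n α * (α + 1) < (n - 2) ^ 2 / 4) :=
  ⟨(lt_thresholdExponent_iff_mul_lt_four hn).trans
      (indicialDiscrim_pos_iff_mul_lt_four (by linarith) hα hαn).symm,
    indicialDiscrim_pos_iff_singularCoeff_mul_lt hα.ne'⟩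

end

theorem stmt_5 (N : ℕ) (hN : 3 ≤ N) (α : ℝ) (hα : 0 < α) (hα4 : α < 4 / ((N : ℝ) - 2))
    (α₀ β Λ : ℝ)
    (hα₀ : α₀ = 4 / ((N : ℝ) - 4 + 2 * Real.sqrt ((N : ℝ) - 1)))
    (hβ : β = 2 / α * ((N : ℝ) - 2 - 2 / α))
    (hΛ : Λ = (1 / α - ((N : ℝ) - 2) / 4) ^ 2 - (((N : ℝ) - 2) / 2 - 1 / α)) :
    (α < α₀ ↔ 0 < Λ) ∧ (0 < Λ ↔ β * (α + 1) < ((N : ℝ) - 2) ^ 2 / 4) := by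
  subst hα₀ hβ hΛ
  have two_lt_N : (2 : ℝ) < N := by exact_mod_cast hN
  exact stmt_5_general two_lt_N hα (mul_sub_four_sub_two_mul_sqrt_le_four two_lt_N hα hα4)
end

section
/- Suppose K : (0,∞)×ℝ^N×ℝ^N → ℝ is measurable and there exist constants A, a > 0 such that 0 < K(τ,x,y) ≤ A τ^{−N/2} exp(−|x−y|²/(aτ)) h(τ,x) h(τ,y) for all τ>0 and x,y≠0. Let c ≥ 1, 0 ≤ b ≤ 2, and κ ≥ 0 (with κ > 0 if b = 2) satisfy b + (c−1)η − κ < 2. Then b + (c+1)η − κ < N (since 2η < N−2), so one may fix ε with 0 ≤ ε < min{1/4, N − (b + (1+c)η − κ)}. Define Ψ(t,x) = h(t,x)^c |x|^{−b} (|x|/(|x|+√t))^κ for t>0, x≠0. Then for every real m > κ−2 there exists a constant B_m > 0 such that for every 0 < r < ∞, every t > 0 and every x ≠ 0, ∫₀^t ∫_{ℝ^N} K(t−s,x,y) 1_{{|y|<r}}(y) Ψ(s,y) s^{m/2} dy ds ≤ B_m r^ε t^{(m+2−b)/2} |x|^{−ε} h(t,x); moreover, when ε = 0 the same estimate holds with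 the factor 1_{{|y|<r}} omitted and r^ε replaced by 1, and B_m → 0 as m → ∞. -/
open MeasureTheory Filter

noncomputable section

/-- `N`-dimensional Euclidean space. -/
abbrev Euc (N : ℕ) := EuclideanSpace ℝ (Fin N)

/-!
Put `q = √(t - s)`, `T = √t` and `p = max (c η - κ) 0`. Apart from `‖y‖ ^ ε` and `s ^ (m / 2)`, the
source is at most `‖y‖ ^ (-(b + ε)) (1 + T / ‖y‖) ^ p`. By the triangle inequality these singular
factors may be replaced by the same factors at `x`, regularized at scale `q`; the price is a
scale-invariant weight in `(x - y) / q` and `y / q`. The Gaussian absorbs its growth, and its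
singularity at `y = 0`, combined with that of the kernel, has order `b + ε + η + p < N`; so the
integral in `y` is bounded uniformly in `x` and `q`. Comparing scale `q` with scale `T` at `x` costs
a factor `(1 - s / t) ^ (-ν / 2)` with `ν = max (b + p - η) 0 < 2`. Hence `B m` is a constant times
the Beta integral of `u ^ (m / 2) (1 - u) ^ (-ν / 2)`, which tends to `0` as `m → ∞`.
-/

section Elementary

lemma hardy_coefficient_pos {n α : ℝ} (hn : 0 < n) (hα : 2 / n < α) :
    0 < 2 / α * (n - 2 / α) := by
  have hα0 : 0 < α := (by positivity : 0 < 2 / n).trans hα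
  exact mul_pos (by positivity) (sub_pos.2 ((div_lt_comm₀ hα0 hn).2 hα))

lemma half_sub_sqrt_pos {n γ : ℝ} (hn : 0 < n) (hγ : 0 < γ) :
    0 < n / 2 - √(n ^ 2 / 4 - γ) := by
  rw [sub_pos, Real.sqrt_lt' (by positivity)]
  linarith

lemma exp_neg_sq_div_mul_one_add_rpow_le {a k u : ℝ} (ha : 0 < a) (hk : 0 ≤ k) (hu : 0 ≤ u) :
    Real.exp (-u ^ 2 / a) * (1 + u) ^ k ≤ k ^ k * Real.exp (1 + a / 4) := by
  have hpow : (1 + u) ^ k ≤ k ^ k * Real.exp (1 + u) := by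
    simpa [abs_of_nonneg (by positivity : 0 ≤ 1 + u)] using
      ProbabilityTheory.rpow_abs_le_mul_exp_abs (1 + u) hk one_ne_zero
  have hsq : u - u ^ 2 / a ≤ a / 4 := by
    have hcomplete : a / 4 - (u - u ^ 2 / a) = (u - a / 2) ^ 2 / a := by field_simp; ring
    have : 0 ≤ (u - a / 2) ^ 2 / a := by positivity
    linarith
  calc Real.exp (-u ^ 2 / a) * (1 + u) ^ k
      ≤ Real.exp (-u ^ 2 / a) * (k ^ k * Real.exp (1 + u)) := by gcongr
    _ = k ^ k * Real.exp (1 + (u - u ^ 2 / a)) := by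
        rw [mul_left_comm, ← Real.exp_add]; congr 2; ring
    _ ≤ k ^ k * Real.exp (1 + a / 4) := by gcongr

lemma intervalIntegrable_rpow_mul_one_sub_rpow {k l : ℝ} (hk : -1 < k) (hl : -1 < l) :
    IntervalIntegrable (fun u : ℝ => u ^ k * (1 - u) ^ l) volume 0 1 := by
  have hcomplex := (Complex.betaIntegral_convergent (u := ((k + 1 : ℝ) : ℂ))
    (v := ((l + 1 : ℝ) : ℂ)) (by simpa using by linarith) (by simpa using by linarith)).norm
  rw [intervalIntegrable_iff_integrableOn_Ioo_of_le zero_le_one] at hcomplex ⊢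
  refine hcomplex.congr_fun (fun u hu => ?_) measurableSet_Ioo
  have hu1 : 0 < 1 - u := sub_pos.2 hu.2
  have hcast : (1 : ℂ) - u = ((1 - u : ℝ) : ℂ) := by push_cast; rfl
  simp [hcast, Complex.norm_cpow_eq_rpow_re_of_pos hu.1, Complex.norm_cpow_eq_rpow_re_of_pos hu1,
    -Complex.ofReal_sub]

lemma integral_rpow_mul_one_sub_rpow_pos {k l : ℝ} (hk : -1 < k) (hl : -1 < l) :
    0 < ∫ u in (0 : ℝ)..1, u ^ k * (1 - u) ^ l :=
  intervalIntegral.intervalIntegral_pos_of_pos_on (intervalIntegrable_rpow_mul_one_sub_rpow hk hl)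
    (fun _ hu => mul_pos (Real.rpow_pos_of_pos hu.1 _) (Real.rpow_pos_of_pos (sub_pos.2 hu.2) _))
    zero_lt_one

lemma tendsto_integral_rpow_mul_one_sub_rpow_atTop {l : ℝ} (hl : -1 < l) :
    Tendsto (fun k : ℝ => ∫ u in (0 : ℝ)..1, u ^ k * (1 - u) ^ l) atTop (nhds 0) := by
  simp only [intervalIntegral.integral_of_le zero_le_one, integral_Ioc_eq_integral_Ioo]
  have hdominating : IntegrableOn (fun u : ℝ => (1 - u) ^ l) (Set.Ioo 0 1) := by
    simpa [intervalIntegrable_iff_integrableOn_Ioo_of_le] using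
      intervalIntegrable_rpow_mul_one_sub_rpow (k := 0) (by norm_num) hl
  suffices Tendsto (fun k : ℝ => ∫ u in Set.Ioo (0 : ℝ) 1, u ^ k * (1 - u) ^ l) atTop
      (nhds (∫ _ in Set.Ioo (0 : ℝ) 1, 0)) by simpa using this
  refine tendsto_integral_filter_of_dominated_convergence _
    (.of_forall fun k => Measurable.aestronglyMeasurable (by fun_prop)) ?_ hdominating ?_
  · filter_upwards [eventually_ge_atTop 0] with k hk
    refine ae_restrict_of_forall_mem measurableSet_Ioo fun u hu => ?_
    have hu1 : 0 ≤ (1 - u) ^ l := Real.rpow_nonneg (sub_nonneg.2 hu.2.le) _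
    rw [Real.norm_of_nonneg (mul_nonneg (Real.rpow_nonneg hu.1.le _) hu1)]
    exact mul_le_of_le_one_left hu1 (Real.rpow_le_one hu.1.le hu.2.le hk)
  · refine ae_restrict_of_forall_mem measurableSet_Ioo fun u hu => ?_
    simpa using (tendsto_rpow_atTop_of_base_lt_one u (by linarith [hu.1]) hu.2).mul_const
      ((1 - u) ^ l)

lemma integrableOn_Ioo_comp_div {f : ℝ → ℝ} {t : ℝ} (ht : 0 < t)
    (hf : IntervalIntegrable f volume 0 1) : IntegrableOn (fun s => f (s / t)) (Set.Ioo 0 t) := by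
  rw [← intervalIntegrable_iff_integrableOn_Ioo_of_le ht.le]
  simpa [div_eq_inv_mul] using hf.comp_mul_left (c := t⁻¹)

lemma integral_Ioo_comp_div (f : ℝ → ℝ) {t : ℝ} (ht : 0 < t) :
    ∫ s in Set.Ioo 0 t, f (s / t) = t * ∫ u in (0 : ℝ)..1, f u := by
  rw [← integral_Ioc_eq_integral_Ioo, ← intervalIntegral.integral_of_le ht.le,
    intervalIntegral.integral_comp_div _ ht.ne', zero_div, div_self ht.ne', smul_eq_mul]

lemma one_add_div_rpow_mul_le {q T X η b ε p ν : ℝ} (hq : 0 < q) (hqT : q ≤ T) (hX : 0 < X)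
    (hb : 0 ≤ b) (hε : 0 ≤ ε) (hν : 0 ≤ ν) (hpν : b + p - η ≤ ν) :
    (1 + q / X) ^ η * ((q + X) ^ (-(b + ε)) * ((T + X) / (q + X)) ^ p) ≤
      X ^ (-ε) * (1 + T / X) ^ η * T ^ (-b) * (q / T) ^ (-ν) := by
  have hT : 0 < T := hq.trans_le hqT
  set ρ := (q + X) / (T + X) with hρ
  have hρ0 : 0 < ρ := by positivity
  have hρ1 : ρ ≤ 1 := (div_le_one (by positivity)).2 (by linarith)
  have hqρ : q / T ≤ ρ := by
    rw [hρ, div_le_div_iff₀ hT (by positivity)]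
    nlinarith
  have hqX : q + X = ρ * (T + X) := by rw [hρ]; field_simp
  have hone : 1 + q / X = ρ * (1 + T / X) := by rw [hρ]; field_simp; ring
  have hinv : (T + X) / (q + X) = ρ⁻¹ := by rw [hρ, inv_div]
  have hρpow : ρ ^ (η - b - p) ≤ (q / T) ^ (-ν) := calc
    ρ ^ (η - b - p) ≤ ρ ^ (-ν) := Real.rpow_le_rpow_of_exponent_ge hρ0 hρ1 (by linarith)
    _ ≤ (q / T) ^ (-ν) := Real.rpow_le_rpow_of_nonpos (by positivity) hqρ (by linarith)
  have hTb : (T + X) ^ (-b) ≤ T ^ (-b) :=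
    Real.rpow_le_rpow_of_nonpos hT (by linarith) (by linarith)
  have hXε : (q + X) ^ (-ε) ≤ X ^ (-ε) :=
    Real.rpow_le_rpow_of_nonpos hX (by linarith) (by linarith)
  calc (1 + q / X) ^ η * ((q + X) ^ (-(b + ε)) * ((T + X) / (q + X)) ^ p)
      = (ρ * (1 + T / X)) ^ η * ((ρ * (T + X)) ^ (-b) * (q + X) ^ (-ε) * ρ⁻¹ ^ p) := by
        rw [neg_add, Real.rpow_add (by positivity), hinv, hone, ← hqX]
    _ = (1 + T / X) ^ η * (T + X) ^ (-b) * (q + X) ^ (-ε) * ρ ^ (η - b - p) := by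
        rw [Real.mul_rpow hρ0.le (by positivity), Real.mul_rpow hρ0.le (by positivity),
          Real.inv_rpow hρ0.le, ← Real.rpow_neg hρ0.le, sub_eq_add_neg, sub_eq_add_neg,
          Real.rpow_add hρ0, Real.rpow_add hρ0]
        ring
    _ ≤ (1 + T / X) ^ η * T ^ (-b) * X ^ (-ε) * (q / T) ^ (-ν) := by gcongr
    _ = X ^ (-ε) * (1 + T / X) ^ η * T ^ (-b) * (q / T) ^ (-ν) := by ring

lemma rpow_neg_mul_sqrt_div_sqrt_rpow {s t b m ν : ℝ} (hs : 0 < s) (hst : s < t) :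
    √t ^ (-b) * (√(t - s) / √t) ^ (-ν) * s ^ (m / 2) =
      t ^ ((m - b) / 2) * ((s / t) ^ (m / 2) * (1 - s / t) ^ (-(ν / 2))) := by
  have ht : 0 < t := hs.trans hst
  have hratio : √(t - s) / √t = (1 - s / t) ^ (1 / 2 : ℝ) := by
    rw [← Real.sqrt_div (sub_nonneg.2 hst.le), sub_div, div_self ht.ne', Real.sqrt_eq_rpow]
  have hs' : s ^ (m / 2) = t ^ (m / 2) * (s / t) ^ (m / 2) := by
    rw [← Real.mul_rpow ht.le (by positivity), mul_div_cancel₀ _ ht.ne']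
  have hnonneg : 0 ≤ 1 - s / t := sub_nonneg.2 ((div_le_one ht).2 hst.le)
  rw [hratio, hs', Real.sqrt_eq_rpow, ← Real.rpow_mul ht.le, ← Real.rpow_mul hnonneg,
    show (m - b) / 2 = 1 / 2 * -b + m / 2 by ring, Real.rpow_add ht,
    show 1 / 2 * -ν = -(ν / 2) by ring]
  ring

end Elementary

section Fubini

variable {α β : Type*} [MeasurableSpace α] [MeasurableSpace β] {μ : Measure α} {ν : Measure β}
  [SFinite ν] {F : α × β → ℝ} {G : α → β → ℝ} {g : α → ℝ} {M : ℝ}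

lemma integrable_prod_and_integral_integral_le_of_abs_le_mul
    (hF : AEStronglyMeasurable F (μ.prod ν)) (hg : Integrable g μ) (hg0 : ∀ᵐ s ∂μ, 0 ≤ g s)
    (hG : ∀ᵐ s ∂μ, Integrable (G s) ν) (hGM : ∀ᵐ s ∂μ, ∫ y, G s y ∂ν ≤ M)
    (hFG : ∀ᵐ s ∂μ, ∀ᵐ y ∂ν, |F (s, y)| ≤ g s * G s y) :
    Integrable F (μ.prod ν) ∧ ∫ s, ∫ y, F (s, y) ∂ν ∂μ ≤ M * ∫ s, g s ∂μ := by
  have hslice : ∀ᵐ s ∂μ, Integrable (fun y => F (s, y)) ν := by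
    filter_upwards [hF.prodMk_left, hG, hFG] with s hs hGs hFGs
    exact (hGs.const_mul (g s)).mono' hs hFGs
  have hnorm : ∀ᵐ s ∂μ, ∫ y, ‖F (s, y)‖ ∂ν ≤ M * g s := by
    filter_upwards [hslice, hG, hGM, hg0, hFG] with s hs hGs hGMs hgs hFGs
    calc ∫ y, ‖F (s, y)‖ ∂ν ≤ ∫ y, g s * G s y ∂ν :=
          integral_mono_ae hs.norm (hGs.const_mul _) hFGs
      _ = g s * ∫ y, G s y ∂ν := integral_const_mul _ _
      _ ≤ M * g s := by rw [mul_comm M]; gcongr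
  have hF_int : Integrable F (μ.prod ν) := by
    refine (integrable_prod_iff hF).2
      ⟨hslice, (hg.const_mul M).mono' hF.norm.integral_prod_right' ?_⟩
    filter_upwards [hnorm] with s hs
    rwa [Real.norm_of_nonneg (by positivity)]
  refine ⟨hF_int, ?_⟩
  calc ∫ s, ∫ y, F (s, y) ∂ν ∂μ ≤ ∫ s, M * g s ∂μ := by
        refine integral_mono_ae hF_int.integral_prod_left (hg.const_mul M) ?_
        filter_upwards [hnorm] with s hs
        exact (Real.le_norm_self _).trans ((norm_integral_le_integral_norm _).trans hs)
    _ = M * ∫ s, g s ∂μ := integral_const_mul _ _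

end Fubini

section Weights

variable {E : Type*} [NormedAddCommGroup E]

/-- The weight `h(t, x) = (1 + √t / |x|) ^ η`. Division by zero makes it equal to `1` at `x = 0`. -/
def parabolicWeight (η t : ℝ) (x : E) : ℝ := (1 + √t / ‖x‖) ^ η

/-- The source profile `Ψ(t, x) = h(t, x) ^ c |x| ^ (-b) (|x| / (|x| + √t)) ^ κ`. -/
def sourceProfile (η b c κ t : ℝ) (x : E) : ℝ :=
  parabolicWeight η t x ^ c * ‖x‖ ^ (-b) * (‖x‖ / (‖x‖ + √t)) ^ κ

lemma parabolicWeight_nonneg (η t : ℝ) (x : E) : 0 ≤ parabolicWeight η t x := by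
  unfold parabolicWeight; positivity

lemma sourceProfile_nonneg (η b c κ t : ℝ) (x : E) : 0 ≤ sourceProfile η b c κ t x := by
  have := parabolicWeight_nonneg η t x
  unfold sourceProfile; positivity

lemma sourceProfile_eq (η b c κ t : ℝ) {x : E} (hx : x ≠ 0) :
    sourceProfile η b c κ t x = (1 + √t / ‖x‖) ^ (c * η - κ) * ‖x‖ ^ (-b) := by
  have hone : 0 < 1 + √t / ‖x‖ := by positivity
  have hinv : ‖x‖ / (‖x‖ + √t) = (1 + √t / ‖x‖)⁻¹ := by field_simp
  rw [sourceProfile, parabolicWeight, hinv, Real.inv_rpow hone.le, ← Real.rpow_neg hone.le,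
    ← Real.rpow_mul hone.le, mul_right_comm, ← Real.rpow_add hone]
  congr 2; ring

lemma sourceProfile_le {η b c κ ε p R s t : ℝ} {y : E} (hp : 0 ≤ p) (hcp : c * η - κ ≤ p)
    (hst : s ≤ t) (hy : y ≠ 0) (hyR : ‖y‖ ^ ε ≤ R) :
    sourceProfile η b c κ s y ≤ R * (‖y‖ ^ (-(b + ε)) * (1 + √t / ‖y‖) ^ p) := by
  have hy' : 0 < ‖y‖ := norm_pos_iff.2 hy
  have hone : 1 ≤ 1 + √s / ‖y‖ := le_add_of_nonneg_right (by positivity)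
  have hpow : (1 + √s / ‖y‖) ^ (c * η - κ) ≤ (1 + √t / ‖y‖) ^ p :=
    (Real.rpow_le_rpow_of_exponent_le hone hcp).trans (by gcongr)
  have hnorm : ‖y‖ ^ (-b) = ‖y‖ ^ ε * ‖y‖ ^ (-(b + ε)) := by
    rw [← Real.rpow_add hy']; congr 1; ring
  calc sourceProfile η b c κ s y = (1 + √s / ‖y‖) ^ (c * η - κ) * ‖y‖ ^ (-b) :=
        sourceProfile_eq η b c κ s hy
    _ ≤ (1 + √t / ‖y‖) ^ p * (R * ‖y‖ ^ (-(b + ε))) := by rw [hnorm]; gcongr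
    _ = R * (‖y‖ ^ (-(b + ε)) * (1 + √t / ‖y‖) ^ p) := by ring

lemma one_add_one_div_norm_rpow_le {σ : ℝ} (hσ : 0 ≤ σ) (z : E) :
    (1 + 1 / ‖z‖) ^ σ ≤ 2 ^ σ * (1 + (Metric.ball 0 1).indicator (fun z : E => ‖z‖ ^ (-σ)) z) := by
  rcases le_or_gt (1 / ‖z‖) 1 with hz | hz
  · have hind : 0 ≤ (Metric.ball 0 1).indicator (fun z : E => ‖z‖ ^ (-σ)) z :=
      Set.indicator_nonneg (fun _ _ => by positivity) z
    calc (1 + 1 / ‖z‖) ^ σ ≤ 2 ^ σ := by gcongr; linarith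
      _ ≤ _ := le_mul_of_one_le_right (by positivity) (le_add_of_nonneg_right hind)
  · have hz0 : 0 < ‖z‖ := one_div_pos.1 (one_pos.trans hz)
    have hz1 : ‖z‖ < 1 := by simpa using (lt_div_iff₀ hz0).1 hz
    rw [Set.indicator_of_mem (by simpa using hz1)]
    calc (1 + 1 / ‖z‖) ^ σ ≤ (2 * ‖z‖⁻¹) ^ σ := by
          rw [one_div] at hz ⊢; gcongr; linarith
      _ = 2 ^ σ * ‖z‖ ^ (-σ) := by
          rw [Real.mul_rpow zero_le_two (by positivity), Real.inv_rpow hz0.le, Real.rpow_neg hz0.le]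
      _ ≤ 2 ^ σ * (1 + ‖z‖ ^ (-σ)) := by gcongr; linarith

variable {x y : E} {q : ℝ}

lemma add_norm_div_norm_le (hq : 0 < q) (hy : y ≠ 0) :
    (q + ‖x‖) / ‖y‖ ≤ (1 + ‖x - y‖ / q) * (1 + q / ‖y‖) := by
  have hy' : 0 < ‖y‖ := norm_pos_iff.2 hy
  have htriangle : ‖x‖ ≤ ‖x - y‖ + ‖y‖ := by simpa using norm_add_le (x - y) y
  have hfactor : (1 + ‖x - y‖ / q) * (1 + q / ‖y‖) =
      (q + ‖x - y‖ + ‖y‖ + ‖x - y‖ * ‖y‖ / q) / ‖y‖ := by field_simp; ring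
  have : 0 ≤ ‖x - y‖ * ‖y‖ / q := by positivity
  rw [hfactor]
  exact div_le_div_of_nonneg_right (by linarith) hy'.le

lemma one_add_div_norm_le {T : ℝ} (hq : 0 < q) (hqT : q ≤ T) (hy : y ≠ 0) :
    1 + T / ‖y‖ ≤ (T + ‖x‖) / (q + ‖x‖) * ((1 + ‖x - y‖ / q) * (1 + q / ‖y‖)) := by
  have hqx : 0 < q + ‖x‖ := by positivity
  set L := (1 + ‖x - y‖ / q) * (1 + q / ‖y‖)
  have hL : 1 + q / ‖y‖ ≤ L :=
    le_mul_of_one_le_left (by positivity) (le_add_of_nonneg_right (by positivity))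
  have hrest : (T - q) / ‖y‖ ≤ (T - q) / (q + ‖x‖) * L := calc
    (T - q) / ‖y‖ = (T - q) / (q + ‖x‖) * ((q + ‖x‖) / ‖y‖) := by field_simp
    _ ≤ (T - q) / (q + ‖x‖) * L :=
      mul_le_mul_of_nonneg_left (add_norm_div_norm_le hq hy)
        (div_nonneg (sub_nonneg.2 hqT) hqx.le)
  calc 1 + T / ‖y‖ = 1 + q / ‖y‖ + (T - q) / ‖y‖ := by ring
    _ ≤ L + (T - q) / (q + ‖x‖) * L := add_le_add hL hrest
    _ = (T + ‖x‖) / (q + ‖x‖) * L := by field_simp; ring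

lemma norm_rpow_mul_one_add_div_rpow_le {T θ p : ℝ} (hq : 0 < q) (hqT : q ≤ T) (hθ : 0 ≤ θ)
    (hp : 0 ≤ p) (hy : y ≠ 0) :
    ‖y‖ ^ (-θ) * (1 + T / ‖y‖) ^ p ≤ (q + ‖x‖) ^ (-θ) * ((T + ‖x‖) / (q + ‖x‖)) ^ p *
      ((1 + ‖x - y‖ / q) ^ (θ + p) * (1 + q / ‖y‖) ^ (θ + p)) := by
  have hT : 0 < T := hq.trans_le hqT
  have hy' : 0 < ‖y‖ := norm_pos_iff.2 hy
  have hqx : 0 < q + ‖x‖ := by positivity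
  rw [← Real.mul_rpow (by positivity) (by positivity)]
  set L := (1 + ‖x - y‖ / q) * (1 + q / ‖y‖)
  have hL0 : 0 < L := by positivity
  have hθle : ‖y‖ ^ (-θ) ≤ (q + ‖x‖) ^ (-θ) * L ^ θ := by
    have := Real.rpow_le_rpow (by positivity) (add_norm_div_norm_le (x := x) hq hy) hθ
    rwa [Real.div_rpow hqx.le hy'.le, div_eq_mul_inv, ← Real.rpow_neg hy'.le,
      ← le_div_iff₀' (by positivity), div_eq_inv_mul, ← Real.rpow_neg hqx.le] at this
  have hple : (1 + T / ‖y‖) ^ p ≤ ((T + ‖x‖) / (q + ‖x‖)) ^ p * L ^ p := by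
    rw [← Real.mul_rpow (by positivity) hL0.le]
    exact Real.rpow_le_rpow (by positivity) (one_add_div_norm_le hq hqT hy) hp
  calc ‖y‖ ^ (-θ) * (1 + T / ‖y‖) ^ p
      ≤ ((q + ‖x‖) ^ (-θ) * L ^ θ) * (((T + ‖x‖) / (q + ‖x‖)) ^ p * L ^ p) := by gcongr
    _ = (q + ‖x‖) ^ (-θ) * ((T + ‖x‖) / (q + ‖x‖)) ^ p * L ^ (θ + p) := by
        rw [Real.rpow_add hL0]; ring

variable [MeasurableSpace E] [BorelSpace E]

lemma measurable_duhamelIntegrand {K : ℝ → E → E → ℝ}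
    (hKmeas : Measurable fun q : ℝ × E × E => K q.1 q.2.1 q.2.2)
    (η b c κ m t : ℝ) (x : E) :
    Measurable fun q : ℝ × E =>
      K (t - q.1) x q.2 * sourceProfile η b c κ q.1 q.2 * q.1 ^ (m / 2) := by
  unfold sourceProfile parabolicWeight
  fun_prop

end Weights

section Gaussian

variable {E : Type*} [NormedAddCommGroup E] [NormedSpace ℝ E]

/-- The Gaussian `τ ^ (-d/2) exp (-|x - y|² / (aτ))` multiplied by a power of `1 + |x - y| / √τ`
and by the singular weight `(1 + √τ / |y|) ^ σ`. Both factors are invariant under parabolic scaling,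
so its mass in `y` is bounded uniformly in `τ` and `x`. -/
def gaussianMajorant (a k σ τ : ℝ) (x y : E) : ℝ :=
  τ ^ (-(Module.finrank ℝ E : ℝ) / 2) * Real.exp (-‖x - y‖ ^ 2 / (a * τ)) *
    (1 + ‖x - y‖ / √τ) ^ k * parabolicWeight σ τ y

lemma gaussianMajorant_nonneg {a k σ τ : ℝ} (hτ : 0 ≤ τ) (x y : E) :
    0 ≤ gaussianMajorant a k σ τ x y := by
  have := parabolicWeight_nonneg σ τ y
  unfold gaussianMajorant; positivity

lemma gaussianMajorant_smul (a k σ : ℝ) {τ : ℝ} (hτ : 0 < τ) (x z : E) :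
    gaussianMajorant a k σ τ x (√τ • z) =
      |(√τ ^ Module.finrank ℝ E)⁻¹| * gaussianMajorant a k σ 1 ((√τ)⁻¹ • x) z := by
  have hq : 0 < √τ := Real.sqrt_pos.2 hτ
  have hsub : ‖x - √τ • z‖ = √τ * ‖(√τ)⁻¹ • x - z‖ := by
    rw [← Real.norm_of_nonneg hq.le, ← norm_smul, Real.norm_of_nonneg hq.le, smul_sub,
      smul_inv_smul₀ hq.ne']
  have hjac : τ ^ (-(Module.finrank ℝ E : ℝ) / 2) = |(√τ ^ Module.finrank ℝ E)⁻¹| := by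
    rw [abs_of_pos (by positivity), ← Real.rpow_natCast, ← Real.rpow_neg hq.le, Real.sqrt_eq_rpow,
      ← Real.rpow_mul hτ.le]
    congr 1; ring
  have hexp : -(√τ * ‖(√τ)⁻¹ • x - z‖) ^ 2 / (a * τ) = -‖(√τ)⁻¹ • x - z‖ ^ 2 / a := by
    rw [mul_pow, Real.sq_sqrt hτ.le]
    field_simp
  have hweight : √τ / (√τ * ‖z‖) = 1 / ‖z‖ := by field_simp
  simp only [gaussianMajorant, parabolicWeight, hsub, norm_smul, Real.norm_of_nonneg hq.le, hjac,
    hexp, hweight, mul_div_cancel_left₀ _ hq.ne', Real.sqrt_one, Real.one_rpow, div_one, mul_one,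
    one_mul, mul_assoc]

lemma exists_gaussianMajorant_one_le {a k σ : ℝ} (ha : 0 < a) (hk : 0 ≤ k) (hσ : 0 ≤ σ) :
    ∃ C : ℝ, 0 ≤ C ∧ ∀ ξ z : E, gaussianMajorant a k σ 1 ξ z ≤
      C * ((1 + ‖ξ - z‖) ^ (-(Module.finrank ℝ E + 1 : ℝ)) +
        (Metric.ball 0 1).indicator (fun z : E => ‖z‖ ^ (-σ)) z) := by
  set d : ℝ := (Module.finrank ℝ E : ℝ)
  have hd : 0 ≤ d := Nat.cast_nonneg _
  set j := k + (d + 1)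
  set M := j ^ j * Real.exp (1 + a / 4)
  refine ⟨M * 2 ^ σ, by positivity, fun ξ z => ?_⟩
  set u := ‖ξ - z‖
  set ψ := (Metric.ball 0 1).indicator (fun z : E => ‖z‖ ^ (-σ)) z
  have hψ : 0 ≤ ψ := Set.indicator_nonneg (fun _ _ => by positivity) z
  have hu : 0 ≤ u := norm_nonneg _
  have hgauss : Real.exp (-u ^ 2 / a) * (1 + u) ^ k ≤ M * (1 + u) ^ (-(d + 1)) := by
    rw [Real.rpow_neg (by positivity), ← div_eq_mul_inv, le_div_iff₀ (by positivity), mul_assoc,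
      ← Real.rpow_add (by positivity)]
    exact exp_neg_sq_div_mul_one_add_rpow_le ha (by positivity) hu
  have hφ : (1 + u) ^ (-(d + 1)) ≤ 1 :=
    Real.rpow_le_one_of_one_le_of_nonpos (by linarith) (by linarith)
  calc gaussianMajorant a k σ 1 ξ z
      = Real.exp (-u ^ 2 / a) * (1 + u) ^ k * (1 + 1 / ‖z‖) ^ σ := by
        simp [gaussianMajorant, parabolicWeight, u]
    _ ≤ (M * (1 + u) ^ (-(d + 1))) * (2 ^ σ * (1 + ψ)) := by
        gcongr; exact one_add_one_div_norm_rpow_le hσ z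
    _ = M * 2 ^ σ * ((1 + u) ^ (-(d + 1)) + (1 + u) ^ (-(d + 1)) * ψ) := by ring
    _ ≤ M * 2 ^ σ * ((1 + u) ^ (-(d + 1)) + ψ) := by
        gcongr; exact mul_le_of_le_one_left hψ hφ

variable [MeasurableSpace E] [BorelSpace E]

lemma measurable_gaussianMajorant (a k σ τ : ℝ) (x : E) :
    Measurable (gaussianMajorant a k σ τ x) := by
  unfold gaussianMajorant parabolicWeight; fun_prop

variable [FiniteDimensional ℝ E] (μ : Measure E) [μ.IsAddHaarMeasure]

lemma exists_integral_gaussianMajorant_one_le {a k σ : ℝ} (ha : 0 < a) (hk : 0 ≤ k) (hσ : 0 ≤ σ)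
    (hσd : σ < Module.finrank ℝ E) :
    ∃ M : ℝ, 0 < M ∧ ∀ ξ : E, Integrable (gaussianMajorant a k σ 1 ξ) μ ∧
      ∫ z, gaussianMajorant a k σ 1 ξ z ∂μ ≤ M := by
  obtain ⟨C, hC, hle⟩ := exists_gaussianMajorant_one_le (E := E) ha hk hσ
  set φ : E → ℝ := fun w => (1 + ‖w‖) ^ (-(Module.finrank ℝ E + 1 : ℝ))
  set ψ : E → ℝ := (Metric.ball 0 1).indicator fun z => ‖z‖ ^ (-σ)
  have hd : 1 ≤ Module.finrank ℝ E := by exact_mod_cast hσ.trans_lt hσd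
  have hφ : Integrable φ μ := integrable_one_add_norm (by simp)
  have hψ : Integrable ψ μ := (integrable_indicator_iff measurableSet_ball).2 <|
    integrableOn_ball_of_norm_le_rpow hd hσd (C := 1)
      (.of_forall fun z => by rw [one_mul, Real.norm_of_nonneg (by positivity)])
      (by fun_prop : Measurable _).aestronglyMeasurable
  have hψ0 : 0 ≤ ∫ z, ψ z ∂μ := integral_nonneg fun z =>
    Set.indicator_nonneg (fun _ _ => by positivity) z
  refine ⟨C * (∫ z, φ z ∂μ + ∫ z, ψ z ∂μ) + 1, by positivity, fun ξ => ?_⟩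
  have hdom : Integrable (fun z => C * (φ (ξ - z) + ψ z)) μ :=
    ((hφ.comp_sub_left ξ).add hψ).const_mul C
  have hint : Integrable (gaussianMajorant a k σ 1 ξ) μ := by
    refine hdom.mono' (measurable_gaussianMajorant a k σ 1 ξ).aestronglyMeasurable
      (.of_forall fun z => ?_)
    rw [Real.norm_of_nonneg (gaussianMajorant_nonneg zero_le_one ξ z)]
    exact hle ξ z
  refine ⟨hint, ?_⟩
  calc ∫ z, gaussianMajorant a k σ 1 ξ z ∂μ ≤ ∫ z, C * (φ (ξ - z) + ψ z) ∂μ :=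
        integral_mono hint hdom (hle ξ)
    _ = C * (∫ z, φ z ∂μ + ∫ z, ψ z ∂μ) := by
        rw [integral_const_mul, integral_add (hφ.comp_sub_left ξ) hψ, integral_sub_left_eq_self]
    _ ≤ _ := by linarith

lemma exists_integral_gaussianMajorant_le {a k σ : ℝ} (ha : 0 < a) (hk : 0 ≤ k) (hσ : 0 ≤ σ)
    (hσd : σ < Module.finrank ℝ E) :
    ∃ M : ℝ, 0 < M ∧ ∀ τ : ℝ, 0 < τ → ∀ x : E, Integrable (gaussianMajorant a k σ τ x) μ ∧
      ∫ y, gaussianMajorant a k σ τ x y ∂μ ≤ M := by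
  obtain ⟨M, hM, hunit⟩ := exists_integral_gaussianMajorant_one_le μ ha hk hσ hσd
  refine ⟨M, hM, fun τ hτ x => ?_⟩
  have hq : 0 < √τ := Real.sqrt_pos.2 hτ
  obtain ⟨hint, hle⟩ := hunit ((√τ)⁻¹ • x)
  constructor
  · rw [← integrable_comp_smul_iff μ _ hq.ne']
    simp_rw [gaussianMajorant_smul a k σ hτ]
    exact hint.const_mul _
  · have hscale := Measure.integral_comp_smul μ (gaussianMajorant a k σ τ x) √τ
    simp_rw [gaussianMajorant_smul a k σ hτ, integral_const_mul, smul_eq_mul] at hscale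
    rwa [← mul_left_cancel₀ (by positivity) hscale]

end Gaussian

section Duhamel

variable {E : Type*} [NormedAddCommGroup E] [NormedSpace ℝ E] {K : ℝ → E → E → ℝ}
  {A a η b c κ ε p ν R m s t : ℝ} {x y : E}

/-- The Gaussian-type bound `|K(τ, x, y)| ≤ A τ ^ (-d/2) exp (-|x - y|² / (aτ)) h(τ, x) h(τ, y)`
with the singular weights `h` of a Hardy-type potential, for `τ > 0` and `x, y ≠ 0`. -/
def HasWeightedGaussianBound (K : ℝ → E → E → ℝ) (A a η : ℝ) : Prop :=
  ∀ τ : ℝ, 0 < τ → ∀ x y : E, x ≠ 0 → y ≠ 0 →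
    |K τ x y| ≤ A * τ ^ (-(Module.finrank ℝ E : ℝ) / 2) * Real.exp (-‖x - y‖ ^ 2 / (a * τ)) *
      parabolicWeight η τ x * parabolicWeight η τ y

lemma HasWeightedGaussianBound.abs_mul_sourceProfile_le (hK : HasWeightedGaussianBound K A a η)
    (hb : 0 ≤ b) (hε : 0 ≤ ε) (hp : 0 ≤ p) (hcp : c * η - κ ≤ p) (hs : 0 < s) (hst : s < t)
    (hx : x ≠ 0) (hy : y ≠ 0) (hyR : ‖y‖ ^ ε ≤ R) :
    |K (t - s) x y * sourceProfile η b c κ s y| ≤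
      A * R * (parabolicWeight η (t - s) x * ((√(t - s) + ‖x‖) ^ (-(b + ε)) *
        ((√t + ‖x‖) / (√(t - s) + ‖x‖)) ^ p)) *
        gaussianMajorant a (b + ε + p) (η + (b + ε + p)) (t - s) x y := by
  have hτ : 0 < t - s := sub_pos.2 hst
  have hq : 0 < √(t - s) := Real.sqrt_pos.2 hτ
  have hR : 0 ≤ R := (by positivity : 0 ≤ ‖y‖ ^ ε).trans hyR
  have hsource := (sourceProfile_le (b := b) hp hcp hst.le hy hyR).trans <|
    mul_le_mul_of_nonneg_left (norm_rpow_mul_one_add_div_rpow_le (x := x) hq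
      (Real.sqrt_le_sqrt (sub_le_self t hs.le)) (add_nonneg hb hε) hp hy) hR
  rw [abs_mul, abs_of_nonneg (sourceProfile_nonneg ..)]
  refine (mul_le_mul (hK _ hτ x y hx hy) hsource (sourceProfile_nonneg ..)
    ((abs_nonneg _).trans (hK _ hτ x y hx hy))).trans_eq ?_
  simp only [gaussianMajorant, parabolicWeight,
    Real.rpow_add (by positivity : 0 < 1 + √(t - s) / ‖y‖) η]
  ring

lemma HasWeightedGaussianBound.abs_duhamelIntegrand_le (hK : HasWeightedGaussianBound K A a η)
    (hA : 0 ≤ A) (hb : 0 ≤ b) (hε : 0 ≤ ε) (hp : 0 ≤ p) (hcp : c * η - κ ≤ p) (hν : 0 ≤ ν)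
    (hpν : b + p - η ≤ ν) (hs : 0 < s) (hst : s < t) (hx : x ≠ 0) (hy : y ≠ 0)
    (hyR : ‖y‖ ^ ε ≤ R) :
    |K (t - s) x y * sourceProfile η b c κ s y * s ^ (m / 2)| ≤
      A * R * (‖x‖ ^ (-ε) * parabolicWeight η t x) * t ^ ((m - b) / 2) *
        ((s / t) ^ (m / 2) * (1 - s / t) ^ (-(ν / 2))) *
        gaussianMajorant a (b + ε + p) (η + (b + ε + p)) (t - s) x y := by
  have hτ : 0 < t - s := sub_pos.2 hst
  have hR : 0 ≤ R := (by positivity : 0 ≤ ‖y‖ ^ ε).trans hyR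
  have hweight : parabolicWeight η (t - s) x * ((√(t - s) + ‖x‖) ^ (-(b + ε)) *
        ((√t + ‖x‖) / (√(t - s) + ‖x‖)) ^ p) ≤
      ‖x‖ ^ (-ε) * parabolicWeight η t x * √t ^ (-b) * (√(t - s) / √t) ^ (-ν) :=
    one_add_div_rpow_mul_le (Real.sqrt_pos.2 hτ) (Real.sqrt_le_sqrt (sub_le_self t hs.le))
      (norm_pos_iff.2 hx) hb hε hν hpν
  have hG := gaussianMajorant_nonneg (a := a) (k := b + ε + p) (σ := η + (b + ε + p)) hτ.le x y
  rw [abs_mul, abs_of_nonneg (by positivity : 0 ≤ s ^ (m / 2))]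
  calc |K (t - s) x y * sourceProfile η b c κ s y| * s ^ (m / 2)
      ≤ A * R * (‖x‖ ^ (-ε) * parabolicWeight η t x * √t ^ (-b) * (√(t - s) / √t) ^ (-ν)) *
          gaussianMajorant a (b + ε + p) (η + (b + ε + p)) (t - s) x y * s ^ (m / 2) := by
        gcongr
        refine (hK.abs_mul_sourceProfile_le hb hε hp hcp hs hst hx hy hyR).trans ?_
        gcongr
    _ = A * R * (‖x‖ ^ (-ε) * parabolicWeight η t x) *
          (√t ^ (-b) * (√(t - s) / √t) ^ (-ν) * s ^ (m / 2)) *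
          gaussianMajorant a (b + ε + p) (η + (b + ε + p)) (t - s) x y := by ring
    _ = _ := by rw [rpow_neg_mul_sqrt_div_sqrt_rpow hs hst]; ring

variable [FiniteDimensional ℝ E] [MeasurableSpace E] [BorelSpace E] (μ : Measure E)
  [μ.IsAddHaarMeasure]

lemma HasWeightedGaussianBound.integrableOn_duhamel_and_integral_le [Nontrivial E] {M : ℝ}
    {S : Set E} (hK : HasWeightedGaussianBound K A a η)
    (hKmeas : Measurable fun q : ℝ × E × E => K q.1 q.2.1 q.2.2)
    (hA : 0 ≤ A) (hb : 0 ≤ b) (hε : 0 ≤ ε) (hp : 0 ≤ p) (hcp : c * η - κ ≤ p) (hν : 0 ≤ ν)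
    (hpν : b + p - η ≤ ν) (hν2 : ν < 2) (hm : -2 < m)
    (hM : ∀ τ : ℝ, 0 < τ → ∀ x : E,
      Integrable (gaussianMajorant a (b + ε + p) (η + (b + ε + p)) τ x) μ ∧
        ∫ y, gaussianMajorant a (b + ε + p) (η + (b + ε + p)) τ x y ∂μ ≤ M)
    (hS : MeasurableSet S) (hR : 0 ≤ R) (hSR : ∀ y ∈ S, ‖y‖ ^ ε ≤ R) (ht : 0 < t) (hx : x ≠ 0) :
    IntegrableOn (fun q : ℝ × E =>
        K (t - q.1) x q.2 * sourceProfile η b c κ q.1 q.2 * q.1 ^ (m / 2))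
      (Set.Ioo 0 t ×ˢ S) (volume.prod μ) ∧
    ∫ s in Set.Ioo 0 t, ∫ y in S, K (t - s) x y * sourceProfile η b c κ s y * s ^ (m / 2) ∂μ ≤
      A * M * (∫ u in (0 : ℝ)..1, u ^ (m / 2) * (1 - u) ^ (-(ν / 2))) * R *
        t ^ ((m + 2 - b) / 2) * ‖x‖ ^ (-ε) * parabolicWeight η t x := by
  set f : ℝ → ℝ := fun u => u ^ (m / 2) * (1 - u) ^ (-(ν / 2))
  set D := A * R * (‖x‖ ^ (-ε) * parabolicWeight η t x) * t ^ ((m - b) / 2)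
  have hweight := parabolicWeight_nonneg η t x
  have hf : IntervalIntegrable f volume 0 1 :=
    intervalIntegrable_rpow_mul_one_sub_rpow (by linarith) (by linarith)
  have hf0 : ∀ s ∈ Set.Ioo 0 t, 0 ≤ D * f (s / t) := fun s hs => by
    have hs0 : 0 < s / t := div_pos hs.1 ht
    have hs1 : 0 < 1 - s / t := sub_pos.2 ((div_lt_one ht).2 hs.2)
    positivity
  rw [IntegrableOn, ← Measure.prod_restrict]
  refine (integrable_prod_and_integral_integral_le_of_abs_le_mul
    (G := fun s => gaussianMajorant a (b + ε + p) (η + (b + ε + p)) (t - s) x)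
    (g := fun s => D * f (s / t)) (M := M)
    (measurable_duhamelIntegrand hKmeas η b c κ m t x).aestronglyMeasurable
    ((integrableOn_Ioo_comp_div ht hf).const_mul D) ?_ ?_ ?_ ?_).imp_right fun h => ?_
  · exact ae_restrict_of_forall_mem measurableSet_Ioo hf0
  · exact ae_restrict_of_forall_mem measurableSet_Ioo fun s hs =>
      (hM _ (sub_pos.2 hs.2) x).1.integrableOn
  · refine ae_restrict_of_forall_mem measurableSet_Ioo fun s hs => ?_
    have hτ : 0 < t - s := sub_pos.2 hs.2
    exact (setIntegral_le_integral (hM _ hτ x).1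
      (.of_forall (gaussianMajorant_nonneg hτ.le x))).trans (hM _ hτ x).2
  · refine ae_restrict_of_forall_mem measurableSet_Ioo fun s hs => ?_
    filter_upwards [ae_restrict_of_ae (μ.ae_ne 0), ae_restrict_mem hS] with y hy hyS
    exact hK.abs_duhamelIntegrand_le hA hb hε hp hcp hν hpν hs.1 hs.2 hx hy (hSR y hyS)
  · refine h.trans_eq ?_
    have htpow : t ^ ((m + 2 - b) / 2) = t ^ ((m - b) / 2) * t := by
      rw [← Real.rpow_add_one ht.ne']; congr 1; ring
    rw [integral_const_mul, integral_Ioo_comp_div f ht, htpow]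
    ring

lemma HasWeightedGaussianBound.exists_duhamel_bound (hK : HasWeightedGaussianBound K A a η)
    (hKmeas : Measurable fun q : ℝ × E × E => K q.1 q.2.1 q.2.2) (hA : 0 < A) (ha : 0 < a)
    (hη : 0 ≤ η) (hb : 0 ≤ b) (hε : 0 ≤ ε) (hbη : b - η < 2) (hbcκ : b + (c - 1) * η - κ < 2)
    (hbεη : b + ε + η < Module.finrank ℝ E)
    (hbεcκ : b + ε + (c + 1) * η - κ < Module.finrank ℝ E) :
    ∃ B : ℝ → ℝ, Tendsto B atTop (nhds 0) ∧ ∀ m : ℝ, -2 < m → 0 < B m ∧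
      ∀ (S : Set E) (R : ℝ), MeasurableSet S → 0 ≤ R → (∀ y ∈ S, ‖y‖ ^ ε ≤ R) →
        ∀ t : ℝ, 0 < t → ∀ x : E, x ≠ 0 →
          IntegrableOn (fun q : ℝ × E =>
              K (t - q.1) x q.2 * sourceProfile η b c κ q.1 q.2 * q.1 ^ (m / 2))
            (Set.Ioo 0 t ×ˢ S) (volume.prod μ) ∧
          ∫ s in Set.Ioo 0 t, ∫ y in S,
              K (t - s) x y * sourceProfile η b c κ s y * s ^ (m / 2) ∂μ ≤
            B m * R * t ^ ((m + 2 - b) / 2) * ‖x‖ ^ (-ε) * parabolicWeight η t x := by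
  have hd : 0 < Module.finrank ℝ E := by
    exact_mod_cast (by positivity : 0 ≤ b + ε + η).trans_lt hbεη
  have : Nontrivial E := Module.nontrivial_of_finrank_pos hd
  obtain ⟨p, hp, hcp, hpd, hp2⟩ : ∃ p, 0 ≤ p ∧ c * η - κ ≤ p ∧
      η + (b + ε + p) < Module.finrank ℝ E ∧ b + p - η < 2 := by
    refine ⟨max (c * η - κ) 0, le_max_right _ _, le_max_left _ _, ?_⟩
    rcases max_choice (c * η - κ) 0 with h | h <;> rw [h] <;> constructor <;> linarith
  obtain ⟨ν, hν, hpν, hν2⟩ : ∃ ν, 0 ≤ ν ∧ b + p - η ≤ ν ∧ ν < 2 :=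
    ⟨max (b + p - η) 0, le_max_right _ _, le_max_left _ _, max_lt hp2 two_pos⟩
  obtain ⟨M, hM0, hM⟩ := exists_integral_gaussianMajorant_le μ ha (by positivity : 0 ≤ b + ε + p)
    (by positivity) hpd
  refine ⟨fun m => A * M * ∫ u in (0 : ℝ)..1, u ^ (m / 2) * (1 - u) ^ (-(ν / 2)), ?_,
    fun m hm => ⟨?_, fun S R hS hR hSR t ht x hx =>
      hK.integrableOn_duhamel_and_integral_le μ hKmeas hA.le hb hε hp hcp hν hpν hν2 hm hM hS hR hSR
        ht hx⟩⟩
  · simpa using ((tendsto_integral_rpow_mul_one_sub_rpow_atTop (by linarith)).comp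
      (tendsto_id.atTop_div_const two_pos)).const_mul (A * M)
  · exact mul_pos (mul_pos hA hM0)
      (integral_rpow_mul_one_sub_rpow_pos (by linarith) (by linarith))

end Duhamel

theorem stmt_7_general {E : Type*} [NormedAddCommGroup E] [NormedSpace ℝ E]
    [FiniteDimensional ℝ E] [MeasurableSpace E] [BorelSpace E] (μ : Measure E)
    [μ.IsAddHaarMeasure] {K : ℝ → E → E → ℝ} {A a η b c κ ε : ℝ}
    (hK : HasWeightedGaussianBound K A a η)
    (hKmeas : Measurable fun q : ℝ × E × E => K q.1 q.2.1 q.2.2) (hA : 0 < A) (ha : 0 < a)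
    (hη : 0 ≤ η) (hb : 0 ≤ b) (hε : 0 ≤ ε) (hbη : b - η < 2) (hbcκ : b + (c - 1) * η - κ < 2)
    (hbεη : b + ε + η < Module.finrank ℝ E)
    (hbεcκ : b + ε + (c + 1) * η - κ < Module.finrank ℝ E) :
    ∃ B : ℝ → ℝ, Tendsto B atTop (nhds 0) ∧ ∀ m : ℝ, -2 < m → 0 < B m ∧
      (∀ r t : ℝ, 0 < r → 0 < t → ∀ x : E, x ≠ 0 →
        IntegrableOn (fun q : ℝ × E =>
            K (t - q.1) x q.2 * sourceProfile η b c κ q.1 q.2 * q.1 ^ (m / 2))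
          (Set.Ioo 0 t ×ˢ Metric.ball 0 r) (volume.prod μ) ∧
        ∫ s in Set.Ioo 0 t, ∫ y in Metric.ball 0 r,
            K (t - s) x y * sourceProfile η b c κ s y * s ^ (m / 2) ∂μ ≤
          B m * r ^ ε * t ^ ((m + 2 - b) / 2) * ‖x‖ ^ (-ε) * parabolicWeight η t x) ∧
      (ε = 0 → ∀ t : ℝ, 0 < t → ∀ x : E, x ≠ 0 →
        IntegrableOn (fun q : ℝ × E =>
            K (t - q.1) x q.2 * sourceProfile η b c κ q.1 q.2 * q.1 ^ (m / 2))
          (Set.Ioo 0 t ×ˢ Set.univ) (volume.prod μ) ∧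
        ∫ s in Set.Ioo 0 t, ∫ y,
            K (t - s) x y * sourceProfile η b c κ s y * s ^ (m / 2) ∂μ ≤
          B m * t ^ ((m + 2 - b) / 2) * ‖x‖ ^ (-ε) * parabolicWeight η t x) := by
  obtain ⟨B, hB, hbound⟩ :=
    hK.exists_duhamel_bound μ hKmeas hA ha hη hb hε hbη hbcκ hbεη hbεcκ
  refine ⟨B, hB, fun m hm => ⟨(hbound m hm).1, fun r t hr ht x hx => ?_, fun hε0 t ht x hx => ?_⟩⟩
  · refine (hbound m hm).2 (Metric.ball 0 r) (r ^ ε) measurableSet_ball (by positivity)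
      (fun y hy => ?_) t ht x hx
    exact Real.rpow_le_rpow (norm_nonneg y) (mem_ball_zero_iff.1 hy).le hε
  · simpa only [Measure.restrict_univ, mul_one] using
      (hbound m hm).2 Set.univ 1 .univ zero_le_one (by simp [hε0]) t ht x hx

theorem stmt_7 (N : ℕ) (hN : 3 ≤ N) (α α₀ β η : ℝ)
    (hα₀ : α₀ = 4 / ((N : ℝ) - 4 + 2 * Real.sqrt ((N : ℝ) - 1)))
    (hα1 : 2 / ((N : ℝ) - 2) < α) (hα2 : α < α₀)
    (hβ : β = 2 / α * ((N : ℝ) - 2 - 2 / α))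
    (hη : η = ((N : ℝ) - 2) / 2 - Real.sqrt (((N : ℝ) - 2) ^ 2 / 4 - β * (α + 1)))
    -- the kernel K with its Gaussian-type upper bound
    (K : ℝ → Euc N → Euc N → ℝ)
    (hKmeas : Measurable (fun p : ℝ × Euc N × Euc N => K p.1 p.2.1 p.2.2))
    (A a : ℝ) (hA : 0 < A) (ha : 0 < a)
    (hK : ∀ τ : ℝ, 0 < τ → ∀ x y : Euc N, x ≠ 0 → y ≠ 0 →
      0 < K τ x y ∧
      K τ x y ≤ A * τ ^ (-(N : ℝ) / 2) * Real.exp (-‖x - y‖ ^ 2 / (a * τ)) *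
        (1 + Real.sqrt τ / ‖x‖) ^ η * (1 + Real.sqrt τ / ‖y‖) ^ η)
    -- the parameters b, c, κ
    (b c κ : ℝ) (hc : 1 ≤ c) (hb0 : 0 ≤ b) (hb2 : b ≤ 2) (hκ0 : 0 ≤ κ)
    (hκb : b = 2 → 0 < κ) (hbcκ : b + (c - 1) * η - κ < 2)
    -- the parameter ε
    (ε : ℝ) (hε0 : 0 ≤ ε)
    (hεlt : ε < min (1 / 4) ((N : ℝ) - (b + (1 + c) * η - κ))) :
    -- b + (c+1)η − κ < N
    b + (c + 1) * η - κ < (N : ℝ) ∧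
    -- the family of constants B_m, tending to 0 as m → ∞
    ∃ B : ℝ → ℝ, Tendsto B atTop (nhds 0) ∧
      ∀ m : ℝ, κ - 2 < m → 0 < B m ∧
        (∀ r t : ℝ, 0 < r → 0 < t → ∀ x : Euc N, x ≠ 0 →
          (∫ s in Set.Ioo 0 t, ∫ y in Metric.ball (0 : Euc N) r,
              K (t - s) x y * ((1 + Real.sqrt s / ‖y‖) ^ η) ^ c * ‖y‖ ^ (-b) *
                (‖y‖ / (‖y‖ + Real.sqrt s)) ^ κ * s ^ (m / 2))
            ≤ B m * r ^ ε * t ^ ((m + 2 - b) / 2) * ‖x‖ ^ (-ε) *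
                (1 + Real.sqrt t / ‖x‖) ^ η) ∧
        -- the case ε = 0, with the indicator omitted (r = ∞)
        (ε = 0 → ∀ t : ℝ, 0 < t → ∀ x : Euc N, x ≠ 0 →
          (∫ s in Set.Ioo 0 t, ∫ y : Euc N,
              K (t - s) x y * ((1 + Real.sqrt s / ‖y‖) ^ η) ^ c * ‖y‖ ^ (-b) *
                (‖y‖ / (‖y‖ + Real.sqrt s)) ^ κ * s ^ (m / 2))
            ≤ B m * t ^ ((m + 2 - b) / 2) * ‖x‖ ^ (-ε) *
                (1 + Real.sqrt t / ‖x‖) ^ η) := by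
  have hN3 : (3 : ℝ) ≤ N := by exact_mod_cast hN
  have hα : 0 < α := (div_pos two_pos (by linarith : 0 < (N : ℝ) - 2)).trans hα1
  have hβ0 : 0 < β := hβ ▸ hardy_coefficient_pos (by linarith) hα1
  have hη0 : 0 < η := hη ▸ half_sub_sqrt_pos (by linarith) (by positivity)
  have hη2 : 2 * η ≤ N - 2 := by
    linarith [Real.sqrt_nonneg (((N : ℝ) - 2) ^ 2 / 4 - β * (α + 1))]
  obtain ⟨hε4, hεN⟩ := lt_min_iff.1 hεlt
  have hKbound : HasWeightedGaussianBound K A a η := fun τ hτ x y hx hy => by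
    rw [abs_of_pos (hK τ hτ x y hx hy).1, finrank_euclideanSpace_fin]
    exact (hK τ hτ x y hx hy).2
  obtain ⟨B, hB, hbound⟩ := stmt_7_general volume hKbound hKmeas hA ha hη0.le hb0 hε0
    (by linarith) hbcκ (by rw [finrank_euclideanSpace_fin]; linarith)
    (by rw [finrank_euclideanSpace_fin]; linarith)
  simp only [sourceProfile, parabolicWeight, ← mul_assoc] at hbound
  refine ⟨by linarith, B, hB, fun m hm => ?_⟩
  obtain ⟨hBm, hball, hwhole⟩ := hbound m (by linarith)
  exact ⟨hBm, fun r t hr ht x hx => (hball r t hr ht x hx).2,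
    fun h t ht x hx => (hwhole h t ht x hx).2⟩

end
end

section
/- Suppose K : (0,∞)×ℝ^N×ℝ^N → ℝ is measurable and there exist constants A, a > 0 such that 0 < K(τ,x,y) ≤ A τ^{−N/2} exp(−|x−y|²/(aτ)) h(τ,x) h(τ,y) for all τ>0 and x,y≠0. Let δ > 0, set a_j = 2^{−j}δ for j ≥ 0, and let χ_j be the indicator function of {x ∈ ℝ^N : |x| > a_j}. Then there exists a constant C > 0 such that for every integer j ≥ 0, every 0 < t ≤ 1 and every x ≠ 0, ∫_{ℝ^N} K(t,x,y) χ_j(y) dy ≤ C h(t,x) ( exp(−a_{j+1}²/(2at)) + χ_{j+1}(x) ). -/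
/-!
On `{ρ < ‖y‖}` either `ρ / 2 < ‖x‖` or `ρ / 2 ≤ ‖x - y‖`. Spending one half of the Gaussian exponent
on this alternative produces the Gaussian factor in `ρ / 2` plus the indicator of `ρ / 2 < ‖x‖`. The
other half remains to be integrated against the weight `(1 + √t / ‖y‖) ^ η`. By parabolic scaling
this may be done at time `1`, where the weight is bounded away from the origin and, because `η` is
less than the dimension, integrable near it; hence the integral is bounded uniformly in `x`.
-/

open MeasureTheory Filter

noncomputable section

open Module Metric

lemma integrableOn_and_setIntegral_abs_le_integral {X : Type*} [MeasurableSpace X] {μ : Measure X}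
    {s : Set X} {f g : X → ℝ} (hs : MeasurableSet s)
    (hf : AEStronglyMeasurable f (μ.restrict s)) (hg : Integrable g μ) (hg_nonneg : 0 ≤ g)
    (hfg : ∀ x ∈ s, |f x| ≤ g x) :
    IntegrableOn f s μ ∧ ∫ x in s, |f x| ∂μ ≤ ∫ x, g x ∂μ := by
  have hfs : IntegrableOn f s μ := hg.integrableOn.mono' hf (ae_restrict_of_forall_mem hs hfg)
  exact ⟨hfs, (setIntegral_mono_on hfs.abs hg.integrableOn hs hfg).trans
    (setIntegral_le_integral hg (.of_forall hg_nonneg))⟩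

lemma exp_neg_norm_sub_sq_div_le {V : Type*} [SeminormedAddCommGroup V] {b ρ : ℝ} (hb : 0 ≤ b)
    (hρ : 0 ≤ ρ) {x y : V} (hy : ρ ≤ ‖y‖) :
    Real.exp (-‖x - y‖ ^ 2 / b) ≤
      Real.exp (-(ρ / 2) ^ 2 / b) + (if ρ / 2 < ‖x‖ then (1 : ℝ) else 0) := by
  split_ifs with hx
  · have hle_one : Real.exp (-‖x - y‖ ^ 2 / b) ≤ 1 :=
      Real.exp_le_one_iff.2 (div_nonpos_of_nonpos_of_nonneg (neg_nonpos.2 (sq_nonneg _)) hb)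
    linarith [Real.exp_pos (-(ρ / 2) ^ 2 / b)]
  · have hdist : ρ / 2 ≤ ‖x - y‖ := by linarith [norm_le_norm_add_norm_sub x y]
    rw [add_zero]
    gcongr

section SingularWeight

variable {V : Type*} [NormedAddCommGroup V]

/-- The weight `h(τ, x) = (1 + √τ / |x|) ^ η`, which is singular at the origin when `0 < η`. Its
junk value at `x = 0` is `1`. -/
def singularWeight (η τ : ℝ) (x : V) : ℝ := (1 + √τ / ‖x‖) ^ η

lemma singularWeight_pos (η τ : ℝ) (x : V) : 0 < singularWeight η τ x := by
  unfold singularWeight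
  positivity

lemma singularWeight_nonneg (η τ : ℝ) (x : V) : 0 ≤ singularWeight η τ x :=
  (singularWeight_pos η τ x).le

lemma singularWeight_le_rpow {η τ c : ℝ} {x : V} (hc : 1 + √τ / ‖x‖ ≤ c) :
    singularWeight η τ x ≤ c ^ max η 0 :=
  calc (1 + √τ / ‖x‖) ^ η ≤ (1 + √τ / ‖x‖) ^ max η 0 :=
        Real.rpow_le_rpow_of_exponent_le (le_add_of_nonneg_right (by positivity)) (le_max_left _ _)
    _ ≤ c ^ max η 0 := Real.rpow_le_rpow (by positivity) hc (le_max_right _ _)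

lemma singularWeight_inv_sqrt_smul [NormedSpace ℝ V] (η : ℝ) {t : ℝ} (ht : 0 < t) (x : V) :
    singularWeight η 1 ((√t)⁻¹ • x) = singularWeight η t x := by
  have hnorm : ‖(√t)⁻¹ • x‖ = (√t)⁻¹ * ‖x‖ := norm_smul_of_nonneg (by positivity) x
  rw [singularWeight, singularWeight, hnorm, Real.sqrt_one, ← div_div, one_div, inv_inv]

variable [MeasurableSpace V] [BorelSpace V]

lemma measurable_singularWeight (η τ : ℝ) : Measurable (singularWeight η τ : V → ℝ) :=
  ((measurable_norm.const_div _).const_add _).pow_const _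

variable [NormedSpace ℝ V] [FiniteDimensional ℝ V] [Nontrivial V]
  (μ : Measure V) [μ.IsAddHaarMeasure]

lemma integrableOn_ball_singularWeight {η : ℝ} (hη : η < finrank ℝ V) (τ r : ℝ) :
    IntegrableOn (singularWeight η τ) (ball (0 : V) r) μ := by
  have hdim : 0 < finrank ℝ V := finrank_pos
  refine integrableOn_ball_of_norm_le_rpow (C := (r + √τ) ^ max η 0) (α := max η 0) hdim
    (max_lt hη (mod_cast hdim)) ?_ (measurable_singularWeight η τ).aestronglyMeasurable
  filter_upwards [ae_restrict_mem measurableSet_ball,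
    ae_restrict_of_ae (measure_eq_zero_iff_ae_notMem.1 (measure_singleton (μ := μ) (0 : V)))]
    with x hxr hx0
  have hx : 0 < ‖x‖ := norm_pos_iff.2 hx0
  have hxr : ‖x‖ < r := mem_ball_zero_iff.1 hxr
  have hbase : 1 + √τ / ‖x‖ ≤ (r + √τ) / ‖x‖ := by
    rw [one_add_div hx.ne']
    gcongr
  calc ‖singularWeight η τ x‖ = singularWeight η τ x :=
        Real.norm_of_nonneg (singularWeight_nonneg η τ x)
    _ ≤ ((r + √τ) / ‖x‖) ^ max η 0 := singularWeight_le_rpow hbase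
    _ = (r + √τ) ^ max η 0 * ‖x‖ ^ (-max η 0) := by
        rw [Real.div_rpow (by linarith [Real.sqrt_nonneg τ]) hx.le, Real.rpow_neg hx.le,
          div_eq_mul_inv]

end SingularWeight

lemma integrable_exp_neg_norm_sq_div {V : Type*} [NormedAddCommGroup V] [NormedSpace ℝ V]
    [FiniteDimensional ℝ V] [Nontrivial V] [MeasurableSpace V] [BorelSpace V] (μ : Measure V)
    [μ.IsAddHaarMeasure] {b : ℝ} (hb : 0 < b) :
    Integrable (fun x : V => Real.exp (-‖x‖ ^ 2 / b)) μ := by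
  have hradial := integrableOn_rpow_mul_exp_neg_mul_sq (inv_pos.2 hb)
    (s := (finrank ℝ V - 1 : ℕ)) (neg_one_lt_zero.trans_le (Nat.cast_nonneg _))
  refine (integrable_fun_norm_addHaar μ (f := fun r => Real.exp (-r ^ 2 / b))).2 ?_
  simpa only [Real.rpow_natCast, smul_eq_mul, neg_mul, neg_div, ← div_eq_inv_mul] using hradial

section WeightedGaussian

variable {V : Type*} [NormedAddCommGroup V]

/-- The Gaussian `exp (-|x - y|² / (b t))` of variance parameter `b` at time `t`, without its
normalizing power of `t`, multiplied by the singular weight in `y`. -/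
def weightedGaussian (b η t : ℝ) (x y : V) : ℝ :=
  Real.exp (-‖x - y‖ ^ 2 / (b * t)) * singularWeight η t y

lemma weightedGaussian_nonneg (b η t : ℝ) (x y : V) : 0 ≤ weightedGaussian b η t x y :=
  mul_nonneg (Real.exp_pos _).le (singularWeight_nonneg η t y)

lemma weightedGaussian_one_le {b : ℝ} (hb : 0 ≤ b) (η : ℝ) (x y : V) :
    weightedGaussian b η 1 x y ≤
      2 ^ max η 0 * Real.exp (-‖y - x‖ ^ 2 / b) +
        (ball (0 : V) 1).indicator (singularWeight η 1) y := by
  have hw := singularWeight_nonneg η 1 y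
  rw [weightedGaussian, mul_one, norm_sub_rev x y]
  by_cases hy : y ∈ ball (0 : V) 1
  · have hle_one : Real.exp (-‖y - x‖ ^ 2 / b) ≤ 1 :=
      Real.exp_le_one_iff.2 (div_nonpos_of_nonpos_of_nonneg (neg_nonpos.2 (sq_nonneg _)) hb)
    rw [Set.indicator_of_mem hy]
    exact (mul_le_of_le_one_left hw hle_one).trans (le_add_of_nonneg_left (by positivity))
  · have hy1 : 1 ≤ ‖y‖ := by simpa only [mem_ball_zero_iff, not_lt] using hy
    have hbase : 1 + √1 / ‖y‖ ≤ 2 := by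
      rw [Real.sqrt_one]
      linarith [div_le_one_of_le₀ hy1 (norm_nonneg y)]
    rw [Set.indicator_of_notMem hy, add_zero, mul_comm]
    gcongr
    exact singularWeight_le_rpow hbase

variable [NormedSpace ℝ V]

lemma weightedGaussian_inv_sqrt_smul (b η : ℝ) {t : ℝ} (ht : 0 < t) (x y : V) :
    weightedGaussian b η 1 ((√t)⁻¹ • x) ((√t)⁻¹ • y) = weightedGaussian b η t x y := by
  have hnorm : ‖(√t)⁻¹ • x - (√t)⁻¹ • y‖ ^ 2 = ‖x - y‖ ^ 2 / t := by
    rw [← smul_sub, norm_smul_of_nonneg (by positivity), mul_pow, inv_pow, Real.sq_sqrt ht.le,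
      inv_mul_eq_div]
  rw [weightedGaussian, weightedGaussian, singularWeight_inv_sqrt_smul η ht, hnorm, ← neg_div,
    div_div, mul_one, mul_comm t b]

variable [FiniteDimensional ℝ V] [Nontrivial V] [MeasurableSpace V] [BorelSpace V]
  (μ : Measure V) [μ.IsAddHaarMeasure]

lemma exists_integral_weightedGaussian_one_le {b η : ℝ} (hb : 0 < b) (hη : η < finrank ℝ V) :
    ∃ C : ℝ, 0 < C ∧ ∀ x : V,
      Integrable (weightedGaussian b η 1 x) μ ∧ ∫ y, weightedGaussian b η 1 x y ∂μ ≤ C := by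
  set γ : V → ℝ := fun y => Real.exp (-‖y‖ ^ 2 / b)
  set φ : V → ℝ := (ball (0 : V) 1).indicator (singularWeight η 1)
  have hγ : Integrable γ μ := integrable_exp_neg_norm_sq_div μ hb
  have hφ : Integrable φ μ :=
    (integrable_indicator_iff measurableSet_ball).2 (integrableOn_ball_singularWeight μ hη 1 1)
  have hγ_pos : 0 < ∫ y, γ y ∂μ := integral_exp_pos hγ
  have hφ_nonneg : 0 ≤ ∫ y, φ y ∂μ :=
    integral_nonneg (Set.indicator_nonneg fun y _ => singularWeight_nonneg η 1 y)
  refine ⟨2 ^ max η 0 * (∫ y, γ y ∂μ) + ∫ y, φ y ∂μ, by positivity, fun x => ?_⟩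
  have hγx : Integrable (fun y => 2 ^ max η 0 * γ (y - x)) μ := (hγ.comp_sub_right x).const_mul _
  have hle : ∀ y, weightedGaussian b η 1 x y ≤ 2 ^ max η 0 * γ (y - x) + φ y :=
    weightedGaussian_one_le hb.le η x
  have hmeas : Measurable (weightedGaussian b η 1 x) :=
    Measurable.mul (by fun_prop) (measurable_singularWeight η 1)
  have hint : Integrable (weightedGaussian b η 1 x) μ :=
    (hγx.add hφ).mono' hmeas.aestronglyMeasurable <| .of_forall fun y =>
      (Real.norm_of_nonneg (weightedGaussian_nonneg b η 1 x y)).trans_le (hle y)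
  refine ⟨hint, ?_⟩
  calc ∫ y, weightedGaussian b η 1 x y ∂μ
      ≤ ∫ y, (2 ^ max η 0 * γ (y - x) + φ y) ∂μ := integral_mono hint (hγx.add hφ) hle
    _ = 2 ^ max η 0 * (∫ y, γ y ∂μ) + ∫ y, φ y ∂μ := by
        rw [integral_add hγx hφ, integral_const_mul, integral_sub_right_eq_self γ x]

lemma exists_integral_weightedGaussian_le {b η : ℝ} (hb : 0 < b) (hη : η < finrank ℝ V) :
    ∃ C : ℝ, 0 < C ∧ ∀ t : ℝ, 0 < t → ∀ x : V,
      Integrable (weightedGaussian b η t x) μ ∧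
        ∫ y, weightedGaussian b η t x y ∂μ ≤ C * t ^ ((finrank ℝ V : ℝ) / 2) := by
  obtain ⟨C, hC, hone⟩ := exists_integral_weightedGaussian_one_le μ hb hη
  refine ⟨C, hC, fun t ht x => ?_⟩
  obtain ⟨hint, hle⟩ := hone ((√t)⁻¹ • x)
  have hscale : weightedGaussian b η t x =
      fun y => weightedGaussian b η 1 ((√t)⁻¹ • x) ((√t)⁻¹ • y) :=
    funext fun y => (weightedGaussian_inv_sqrt_smul b η ht x y).symm
  have hpow : √t ^ finrank ℝ V = t ^ ((finrank ℝ V : ℝ) / 2) := by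
    rw [← Real.rpow_natCast, ← Real.rpow_div_two_eq_sqrt _ ht.le]
  rw [hscale, ← hpow]
  refine ⟨hint.comp_smul (by positivity), ?_⟩
  rw [Measure.integral_comp_inv_smul_of_nonneg μ _ (Real.sqrt_nonneg t), smul_eq_mul, mul_comm]
  gcongr

end WeightedGaussian

section Kernel

variable {V : Type*} [NormedAddCommGroup V]

lemma gaussian_mul_singularWeight_le {a t ρ : ℝ} (ha : 0 ≤ a) (ht : 0 ≤ t) (hρ : 0 ≤ ρ) (η : ℝ)
    {x y : V} (hy : ρ ≤ ‖y‖) :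
    Real.exp (-‖x - y‖ ^ 2 / (a * t)) * singularWeight η t y ≤
      (Real.exp (-(ρ / 2) ^ 2 / (2 * a * t)) + (if ρ / 2 < ‖x‖ then (1 : ℝ) else 0)) *
        weightedGaussian (2 * a) η t x y := by
  have hhalves : Real.exp (-‖x - y‖ ^ 2 / (a * t)) =
      Real.exp (-‖x - y‖ ^ 2 / (2 * a * t)) * Real.exp (-‖x - y‖ ^ 2 / (2 * a * t)) := by
    rw [← Real.exp_add]
    congr 1
    ring
  rw [hhalves, mul_assoc]
  exact mul_le_mul_of_nonneg_right (exp_neg_norm_sub_sq_div_le (by positivity) hρ hy)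
    (weightedGaussian_nonneg (2 * a) η t x y)

theorem stmt_8_general [NormedSpace ℝ V] [FiniteDimensional ℝ V] [Nontrivial V]
    [MeasurableSpace V] [BorelSpace V] (μ : Measure V) [μ.IsAddHaarMeasure]
    {η : ℝ} (hη : η < finrank ℝ V) {K : ℝ → V → V → ℝ} (hKmeas : ∀ τ x, Measurable (K τ x))
    {A a : ℝ} (hA : 0 < A) (ha : 0 < a)
    (hK : ∀ τ : ℝ, 0 < τ → ∀ x y : V, x ≠ 0 → y ≠ 0 →
      |K τ x y| ≤ A * τ ^ (-(finrank ℝ V : ℝ) / 2) * Real.exp (-‖x - y‖ ^ 2 / (a * τ)) *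
        singularWeight η τ x * singularWeight η τ y) :
    ∃ C : ℝ, 0 < C ∧ ∀ ρ : ℝ, 0 < ρ → ∀ t : ℝ, 0 < t → ∀ x : V, x ≠ 0 →
      IntegrableOn (K t x) {y | ρ < ‖y‖} μ ∧
        ∫ y in {y | ρ < ‖y‖}, |K t x y| ∂μ ≤ C * singularWeight η t x *
          (Real.exp (-(ρ / 2) ^ 2 / (2 * a * t)) + (if ρ / 2 < ‖x‖ then (1 : ℝ) else 0)) := by
  obtain ⟨C, hC, hgauss⟩ := exists_integral_weightedGaussian_le μ (by positivity : 0 < 2 * a) hη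
  refine ⟨A * C, by positivity, fun ρ hρ t ht x hx => ?_⟩
  obtain ⟨hint, hle⟩ := hgauss t ht x
  set E : ℝ := Real.exp (-(ρ / 2) ^ 2 / (2 * a * t)) + (if ρ / 2 < ‖x‖ then (1 : ℝ) else 0)
  set B : ℝ := A * t ^ (-(finrank ℝ V : ℝ) / 2) * singularWeight η t x * E
  have hw : 0 < singularWeight η t x := singularWeight_pos η t x
  have hB : 0 ≤ B := by positivity
  have hset : MeasurableSet {y : V | ρ < ‖y‖} := measurableSet_lt measurable_const measurable_norm
  have hbound : ∀ y ∈ {y : V | ρ < ‖y‖}, |K t x y| ≤ B * weightedGaussian (2 * a) η t x y := by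
    intro y (hy : ρ < ‖y‖)
    have hsplit := gaussian_mul_singularWeight_le ha.le ht.le hρ.le η (x := x) hy.le
    calc |K t x y| ≤ _ := hK t ht x y hx (norm_pos_iff.1 (hρ.trans hy))
      _ = A * t ^ (-(finrank ℝ V : ℝ) / 2) * singularWeight η t x *
          (Real.exp (-‖x - y‖ ^ 2 / (a * t)) * singularWeight η t y) := by ring
      _ ≤ A * t ^ (-(finrank ℝ V : ℝ) / 2) * singularWeight η t x *
          (E * weightedGaussian (2 * a) η t x y) := by gcongr
      _ = B * weightedGaussian (2 * a) η t x y := by ring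
  obtain ⟨hKint, hKle⟩ := integrableOn_and_setIntegral_abs_le_integral hset
    (hKmeas t x).aestronglyMeasurable (hint.const_mul B)
    (fun y => mul_nonneg hB (weightedGaussian_nonneg (2 * a) η t x y)) hbound
  refine ⟨hKint, hKle.trans ?_⟩
  calc ∫ y, B * weightedGaussian (2 * a) η t x y ∂μ
      = B * ∫ y, weightedGaussian (2 * a) η t x y ∂μ := integral_const_mul _ _
    _ ≤ B * (C * t ^ ((finrank ℝ V : ℝ) / 2)) := by gcongr
    _ = A * C * singularWeight η t x * E := by
        have hcancel : t ^ (-(finrank ℝ V : ℝ) / 2) * t ^ ((finrank ℝ V : ℝ) / 2) = 1 := by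
          rw [neg_div, Real.rpow_neg ht.le, inv_mul_cancel₀ (by positivity)]
        linear_combination A * C * singularWeight η t x * E * hcancel

end Kernel

theorem stmt_8 (N : ℕ) (hN : 3 ≤ N) (α α₀ β η : ℝ)
    (hα₀ : α₀ = 4 / ((N : ℝ) - 4 + 2 * Real.sqrt ((N : ℝ) - 1)))
    (hα1 : 2 / ((N : ℝ) - 2) < α) (hα2 : α < α₀)
    (hβ : β = 2 / α * ((N : ℝ) - 2 - 2 / α))
    (hη : η = ((N : ℝ) - 2) / 2 - Real.sqrt (((N : ℝ) - 2) ^ 2 / 4 - β * (α + 1)))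
    -- the kernel K with its Gaussian-type upper bound
    (K : ℝ → Euc N → Euc N → ℝ)
    (hKmeas : Measurable (fun p : ℝ × Euc N × Euc N => K p.1 p.2.1 p.2.2))
    (A a : ℝ) (hA : 0 < A) (ha : 0 < a)
    (hK : ∀ τ : ℝ, 0 < τ → ∀ x y : Euc N, x ≠ 0 → y ≠ 0 →
      0 < K τ x y ∧
      K τ x y ≤ A * τ ^ (-(N : ℝ) / 2) * Real.exp (-‖x - y‖ ^ 2 / (a * τ)) *
        (1 + Real.sqrt τ / ‖x‖) ^ η * (1 + Real.sqrt τ / ‖y‖) ^ η)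
    (δ : ℝ) (hδ : 0 < δ) :
    ∃ C : ℝ, 0 < C ∧ ∀ j : ℕ, ∀ t : ℝ, 0 < t → t ≤ 1 → ∀ x : Euc N, x ≠ 0 →
      (∫ y in {y : Euc N | δ / 2 ^ j < ‖y‖}, K t x y)
        ≤ C * (1 + Real.sqrt t / ‖x‖) ^ η *
            (Real.exp (-(δ / 2 ^ (j + 1)) ^ 2 / (2 * a * t)) +
              (if δ / 2 ^ (j + 1) < ‖x‖ then (1 : ℝ) else 0)) := by
  have : NeZero N := ⟨by omega⟩
  have hdim : finrank ℝ (Euc N) = N := finrank_euclideanSpace_fin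
  have hηN : η < finrank ℝ (Euc N) := by
    rw [hdim, hη]
    linarith [Real.sqrt_nonneg (((N : ℝ) - 2) ^ 2 / 4 - β * (α + 1)), N.cast_nonneg (α := ℝ)]
  obtain ⟨C, hC, hbound⟩ := stmt_8_general volume hηN (K := K)
    (fun τ x => hKmeas.comp (by fun_prop : Measurable fun y => (τ, x, y))) hA ha
    fun τ hτ x y hx hy => by
      rw [hdim, abs_of_pos (hK τ hτ x y hx hy).1]
      exact (hK τ hτ x y hx hy).2
  refine ⟨C, hC, fun j t ht _ x hx => ?_⟩
  rw [pow_succ 2 j, ← div_div δ]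
  exact ((le_abs_self _).trans abs_integral_le_integral_abs).trans
    (hbound (δ / 2 ^ j) (by positivity) t ht x hx).2

end
end

section
/- Define the four triplets (b₁,c₁,κ₁) = (2, 1, ρ), (b₂,c₂,κ₂) = (0, 1+α, 0), (b₃,c₃,κ₃) = (2(α−1)/α, 2, 0), and (b₄,c₄,κ₄) = (2, 1, αρ). Then b₃ < 2, and for each j ∈ {1,2,3,4} the inequality b_j + (c_j − 1)η − κ_j < 2 holds. -/
/-!
Put `s = 2 / α`, so that `β = s (N - 2 - s)`, and let `η ≤ η₊` be the roots of
`x (N - 2 - x) = β (α + 1)`; thus `ρ = s - η₊`. The upper bound on `α` puts `s` to the right of the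
midpoint `(N - 2) / 2` of the two roots, and the lower bound makes `β` positive. Hence
`s (N - 2 - s) = β < β (α + 1)`, so `s` lies outside the interval between the roots, on its right:
`η ≤ η₊ < s`. The inequalities for `j = 1, 4` say `ρ > 0`, and those for `j = 2, 3` say `η < s`,
since `b₃ = 2 - s`.
-/

/-- The smaller exponent `x` for which `|·| ^ (-x)` solves `-Δ v = c |·| ^ (-2) v` away from the
origin in dimension `N`, that is, the smaller root of `x (N - 2 - x) = c`. For
`c > (N - 2) ^ 2 / 4`, where there are no real roots, the value is the midpoint `(N - 2) / 2`. -/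
noncomputable def lowerIndicialRoot (N c : ℝ) : ℝ :=
  (N - 2) / 2 - √((N - 2) ^ 2 / 4 - c)

/-- The larger root of `x (N - 2 - x) = c`, with the same convention as `lowerIndicialRoot` when
there are no real roots. -/
noncomputable def upperIndicialRoot (N c : ℝ) : ℝ :=
  (N - 2) / 2 + √((N - 2) ^ 2 / 4 - c)

theorem lowerIndicialRoot_le_upperIndicialRoot (N c : ℝ) :
    lowerIndicialRoot N c ≤ upperIndicialRoot N c := by
  unfold lowerIndicialRoot upperIndicialRoot
  linarith [Real.sqrt_nonneg ((N - 2) ^ 2 / 4 - c)]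

theorem upperIndicialRoot_lt {N c s : ℝ} (hs : (N - 2) / 2 < s) (hc : s * (N - 2 - s) < c) :
    upperIndicialRoot N c < s := by
  have hsqrt : √((N - 2) ^ 2 / 4 - c) < s - (N - 2) / 2 :=
    (Real.sqrt_lt' (sub_pos.2 hs)).2 (by linarith)
  exact lt_sub_iff_add_lt'.1 hsqrt

theorem four_div_lt_four_div_sub_two {N : ℝ} (hN : 2 < N) :
    4 / (N - 4 + 2 * √(N - 1)) < 4 / (N - 2) := by
  have hsqrt : 1 < √(N - 1) := Real.lt_sqrt_of_sq_lt (by linarith)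
  exact div_lt_div_of_pos_left four_pos (by linarith) (by linarith)

theorem sub_two_div_two_lt_two_div {N α : ℝ} (hN : 2 < N) (hα : 0 < α)
    (hlt : α < 4 / (N - 4 + 2 * √(N - 1))) : (N - 2) / 2 < 2 / α := by
  have hα4 : α < 4 / (N - 2) := hlt.trans (four_div_lt_four_div_sub_two hN)
  rw [lt_div_iff₀ (sub_pos.2 hN)] at hα4
  rw [div_lt_div_iff₀ two_pos hα]
  linarith

theorem upperIndicialRoot_lt_two_div {N α : ℝ} (hα : 0 < α) (hlower : (N - 2) / 2 < 2 / α)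
    (hupper : 2 / α < N - 2) :
    upperIndicialRoot N (2 / α * (N - 2 - 2 / α) * (α + 1)) < 2 / α := by
  have hβ : 0 < 2 / α * (N - 2 - 2 / α) := mul_pos (by positivity) (sub_pos.2 hupper)
  exact upperIndicialRoot_lt hlower (lt_mul_of_one_lt_right hβ (lt_add_of_pos_left 1 hα))

theorem stmt_9_general (N : ℝ) (hN : 2 < N) (α α₀ β ρ η : ℝ)
    (hα₀ : α₀ = 4 / (N - 4 + 2 * √(N - 1)))
    (hα1 : 2 / (N - 2) < α) (hα2 : α < α₀)
    (hβ : β = 2 / α * (N - 2 - 2 / α))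
    (hρ : ρ = 2 / α - (N - 2) / 2 - √((N - 2) ^ 2 / 4 - β * (α + 1)))
    (hη : η = (N - 2) / 2 - √((N - 2) ^ 2 / 4 - β * (α + 1))) :
    2 * (α - 1) / α < 2 ∧
    2 + (1 - 1) * η - ρ < 2 ∧
    0 + (1 + α - 1) * η - 0 < 2 ∧
    2 * (α - 1) / α + (2 - 1) * η - 0 < 2 ∧
    2 + (1 - 1) * η - α * ρ < 2 := by
  have hN' : 0 < N - 2 := sub_pos.2 hN
  have hα : 0 < α := (div_pos two_pos hN').trans hα1
  have hlower : (N - 2) / 2 < 2 / α := sub_two_div_two_lt_two_div hN hα (hα₀ ▸ hα2)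
  have hroot : upperIndicialRoot N (β * (α + 1)) < 2 / α :=
    hβ ▸ upperIndicialRoot_lt_two_div hα hlower ((div_lt_comm₀ hN' hα).1 hα1)
  have hρ_pos : 0 < ρ := by
    rw [hρ, sub_sub]
    exact sub_pos.2 hroot
  have hη_lt : η < 2 / α :=
    hη.trans_lt ((lowerIndicialRoot_le_upperIndicialRoot N (β * (α + 1))).trans_lt hroot)
  have hαη : η * α < 2 := (lt_div_iff₀ hα).1 hη_lt
  have hb₃ : 2 * (α - 1) / α = 2 - 2 / α := by field_simp
  refine ⟨?_, ?_, ?_, ?_, ?_⟩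
  · exact hb₃ ▸ sub_lt_self 2 (div_pos two_pos hα)
  · linarith
  · linarith
  · linarith
  · linarith [mul_pos hα hρ_pos]

theorem stmt_9 (N : ℕ) (hN : 3 ≤ N) (α α₀ β ρ η : ℝ)
    (hα₀ : α₀ = 4 / ((N : ℝ) - 4 + 2 * Real.sqrt ((N : ℝ) - 1)))
    (hα1 : 2 / ((N : ℝ) - 2) < α) (hα2 : α < α₀)
    (hβ : β = 2 / α * ((N : ℝ) - 2 - 2 / α))
    (hρ : ρ = 2 / α - ((N : ℝ) - 2) / 2 - Real.sqrt (((N : ℝ) - 2) ^ 2 / 4 - β * (α + 1)))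
    (hη : η = ((N : ℝ) - 2) / 2 - Real.sqrt (((N : ℝ) - 2) ^ 2 / 4 - β * (α + 1))) :
    2 * (α - 1) / α < 2 ∧
    2 + (1 - 1) * η - ρ < 2 ∧
    0 + (1 + α - 1) * η - 0 < 2 ∧
    2 * (α - 1) / α + (2 - 1) * η - 0 < 2 ∧
    2 + (1 - 1) * η - α * ρ < 2 :=
  stmt_9_general N (by exact_mod_cast hN) α α₀ β ρ η hα₀ hα1 hα2 hβ hρ hη
end

section
/- Let u ∈ C²((0,∞)), u ≢ 0, be a solution of u'' + ((N−1)/r)u' + |u|^α u = 0 on (0,∞). Then: (1) there exists a constant C such that |u(r)| ≤ C r^{−(N−2−2/α)} for all r > 1; (2) either u(r) converges to a finite limit as r→0 and in that case u'(r) → 0 as r→0, or there exists ε ∈ {+1,−1} such that r^{2/α} u(r) → ε β^{1/α} as r→0, and in that case r^{2/α+1} u'(r) → −ε (2/α) β^{1/α} as r→0. -/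
open Filter

open Set Asymptotics Bornology
open scoped Topology

/-!
Put `γ = 2 / α`, `μ = N - 2 - γ` and `w t = exp (-γ t) u (exp (-t))`. The equation for `u` becomes
the autonomous oscillator `w'' + (γ - μ) w' + |w| ^ α w - β w = 0` with `β = γ μ > 0`, whose
friction `γ - μ` is positive exactly because `α < 4 / (N - 2)`. Its energy in the double well is
nonincreasing, and backwards in time it grows at most like `exp (-2 (γ - μ) t)`; this is the bound
for `r > 1`. Forwards in time (`r → 0`), Barbalat's lemma applied to the energy and then to the
velocity shows that `w` converges to an equilibrium, which is `0` or `± β ^ (1 / α)`. The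
equilibrium `0` is a saddle with eigenvalues `-γ` and `μ`: a trajectory converging to it decays like
`exp (-γ t)`, so that `u` has a limit, and its unstable component `w' + γ w = -r ^ (γ + 1) u'` is
`o(exp (-(γ + 1) t))`, so that `u'` tends to `0`.
-/

section Convergence

theorem norm_sub_sub_smul_deriv_le {E : Type*} [NormedAddCommGroup E] [NormedSpace ℝ E]
    {f f' : ℝ → E} {C a b : ℝ} (hab : a ≤ b) (hf : ∀ t ∈ Icc a b, HasDerivAt f (f' t) t)
    (hosc : ∀ t ∈ Icc a b, ‖f' t - f' a‖ ≤ C) :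
    ‖f b - f a - (b - a) • f' a‖ ≤ C * (b - a) := by
  have hmean := Convex.norm_image_sub_le_of_norm_hasDerivWithin_le
    (f := fun t => f t - t • f' a) (f' := fun t => f' t - f' a)
    (fun t ht => ((hf t ht).fun_sub (((hasDerivAt_id t).smul_const (f' a)).congr_deriv
      (one_smul ℝ _))).hasDerivWithinAt) hosc (convex_Icc a b)
    (left_mem_Icc.2 hab) (right_mem_Icc.2 hab)
  rw [Real.norm_of_nonneg (sub_nonneg.2 hab)] at hmean
  convert hmean using 2
  module

/-- Barbalat's lemma. -/
theorem tendsto_deriv_zero_of_uniformContinuousOn {E : Type*} [NormedAddCommGroup E]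
    [NormedSpace ℝ E] {f f' : ℝ → E} {L : E} {T : ℝ}
    (hf : ∀ t ∈ Ici T, HasDerivAt f (f' t) t) (hlim : Tendsto f atTop (𝓝 L))
    (huc : UniformContinuousOn f' (Ici T)) : Tendsto f' atTop (𝓝 0) := by
  refine Metric.tendsto_nhds.2 fun ε hε => ?_
  obtain ⟨h, hh, hosc⟩ := Metric.uniformContinuousOn_iff_le.1 huc (ε / 2) (half_pos hε)
  have hincr : Tendsto (fun t => f (t + h) - f t) atTop (𝓝 0) := by
    simpa using (hlim.comp (tendsto_atTop_add_const_right atTop h tendsto_id)).sub hlim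
  filter_upwards [eventually_ge_atTop T,
    Metric.tendsto_nhds.1 hincr (ε / 2 * h) (by positivity)] with t ht hsmall
  have hsub : Icc t (t + h) ⊆ Ici T := fun s hs => ht.trans hs.1
  have hmean : ‖f (t + h) - f t - h • f' t‖ ≤ ε / 2 * h := by
    have hclose : ∀ s ∈ Icc t (t + h), ‖f' s - f' t‖ ≤ ε / 2 := fun s hs => by
      rw [← dist_eq_norm]
      refine hosc s (hsub hs) t ht ?_
      rw [Real.dist_eq, abs_of_nonneg (sub_nonneg.2 hs.1)]
      linarith [hs.2]
    simpa using norm_sub_sub_smul_deriv_le (by linarith) (fun s hs => hf s (hsub hs)) hclose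
  have hbound : h * ‖f' t‖ < h * ε := by
    calc h * ‖f' t‖ = ‖h • f' t‖ := by rw [norm_smul, Real.norm_of_nonneg hh.le]
      _ ≤ ‖f (t + h) - f t‖ + ‖f (t + h) - f t - h • f' t‖ := norm_le_norm_add_norm_sub _ _
      _ < ε / 2 * h + ε / 2 * h :=
        add_lt_add_of_lt_of_le (by simpa using hsmall) hmean
      _ = h * ε := by ring
  simpa using lt_of_mul_lt_mul_left hbound hh.le

theorem exists_tendsto_of_tendsto_comp_of_finite {w G : ℝ → ℝ} {c : ℝ} (hw : Continuous w)
    (hle : IsBoundedUnder (· ≤ ·) atTop w) (hge : IsBoundedUnder (· ≥ ·) atTop w)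
    (hG : Continuous G) (hlim : Tendsto (G ∘ w) atTop (𝓝 c)) (hfin : {x | G x = c}.Finite) :
    ∃ l, G l = c ∧ Tendsto w atTop (𝓝 l) := by
  obtain ⟨l, hl⟩ : ∃ l, Tendsto w atTop (𝓝 l) := by
    refine tendsto_of_no_upcrossings dense_univ ?_ hle hge
    rintro p - q - hpq ⟨hp, hq⟩
    refine Ioo_infinite hpq (hfin.subset fun y hy => ?_)
    by_contra hne
    obtain ⟨T, hT⟩ := eventually_atTop.1 (hlim.eventually_ne (Ne.symm hne))
    obtain ⟨s, hs, hsp⟩ := frequently_atTop.1 hp T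
    obtain ⟨t, ht, htq⟩ := frequently_atTop.1 hq T
    obtain ⟨τ, hτ, hwτ⟩ := intermediate_value_uIcc (a := s) (b := t) hw.continuousOn
      (mem_uIcc_of_le (hsp.trans hy.1).le (hy.2.trans htq).le)
    exact hT τ ((le_min hs ht).trans hτ.1) (congrArg G hwτ)
  exact ⟨l, tendsto_nhds_unique ((hG.tendsto l).comp hl) hlim, hl⟩

theorem uniformContinuousOn_comp_of_hasDerivWithinAt_autonomous {E F : Type*}
    [NormedAddCommGroup E] [NormedSpace ℝ E] [UniformSpace F] {X : E → E} {H : E → F}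
    {z : ℝ → E} {s : Set ℝ} {K : Set E} (hs : Convex ℝ s) (hK : IsCompact K)
    (hX : ContinuousOn X K) (hH : ContinuousOn H K)
    (hz : ∀ t ∈ s, HasDerivWithinAt z (X (z t)) s t) (hzK : MapsTo z s K) :
    UniformContinuousOn (H ∘ z) s := by
  obtain ⟨C, hC⟩ := hK.exists_bound_of_continuousOn hX
  have hlip : LipschitzOnWith C.toNNReal z s :=
    hs.lipschitzOnWith_of_nnnorm_hasDerivWithin_le hz fun t ht =>
      NNReal.le_toNNReal_of_coe_le (hC _ (hzK ht))
  exact (hK.uniformContinuousOn_of_continuous hH).comp hlip.uniformContinuousOn hzK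

theorem hasDerivAt_exp_mul_left (k t : ℝ) :
    HasDerivAt (fun t => Real.exp (k * t)) (k * Real.exp (k * t)) t := by
  simpa [mul_comm] using ((hasDerivAt_id t).const_mul k).exp

theorem tendsto_exp_neg_mul_atTop {k : ℝ} (hk : 0 < k) :
    Tendsto (fun t => Real.exp (-k * t)) atTop (𝓝 0) :=
  Real.tendsto_exp_atBot.comp
    ((tendsto_const_mul_atBot_of_neg (neg_neg_of_pos hk)).2 tendsto_id)

end Convergence

/-- `(w, v)` is the phase-space trajectory, defined for all times, of the oscillator
`w'' + a w' + f w = 0` with friction `a` and restoring force `f`. -/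
structure IsDampedTrajectory (a : ℝ) (f w v : ℝ → ℝ) : Prop where
  hasDerivAt_pos : ∀ t, HasDerivAt w (v t) t
  hasDerivAt_vel : ∀ t, HasDerivAt v (-a * v t - f (w t)) t

/-- The mechanical energy along `(w, v)`. Here `F` is the potential of the force `f` of
`IsDampedTrajectory`, with the sign convention `F' = f`. -/
noncomputable def energy (F w v : ℝ → ℝ) (t : ℝ) : ℝ := v t ^ 2 / 2 + F (w t)

namespace IsDampedTrajectory

variable {a K : ℝ} {f F w v : ℝ → ℝ}

theorem hasDerivAt_energy (h : IsDampedTrajectory a f w v) (hF : ∀ x, HasDerivAt F (f x) x)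
    (t : ℝ) : HasDerivAt (energy F w v) (-a * v t ^ 2) t := by
  refine ((((h.hasDerivAt_vel t).pow 2).div_const 2).add
    ((hF (w t)).comp t (h.hasDerivAt_pos t))).congr_deriv ?_
  push_cast
  ring

theorem antitone_energy (h : IsDampedTrajectory a f w v) (ha : 0 ≤ a)
    (hF : ∀ x, HasDerivAt F (f x) x) : Antitone (energy F w v) :=
  antitone_of_hasDerivAt_nonpos (h.hasDerivAt_energy hF) fun t =>
    mul_nonpos_of_nonpos_of_nonneg (neg_nonpos.2 ha) (sq_nonneg (v t))

theorem monotone_energy_add_mul_exp (h : IsDampedTrajectory a f w v) (ha : 0 ≤ a)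
    (hF : ∀ x, HasDerivAt F (f x) x) (hK : ∀ x, 0 ≤ F x + K) :
    Monotone fun t => (energy F w v t + K) * Real.exp (2 * a * t) := by
  refine monotone_of_hasDerivAt_nonneg
    (f' := fun t => 2 * a * (F (w t) + K) * Real.exp (2 * a * t)) (fun t => ?_) fun t => ?_
  · refine (((h.hasDerivAt_energy hF t).add_const K).mul
      (hasDerivAt_exp_mul_left (2 * a) t)).congr_deriv ?_
    rw [energy]
    ring
  · have := hK (w t)
    positivity

theorem sq_add_sq_le_energy (hK : ∀ x, x ^ 2 ≤ F x + K) (t : ℝ) :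
    w t ^ 2 + v t ^ 2 / 2 ≤ energy F w v t + K := by
  rw [energy]
  linarith [hK (w t)]

theorem exists_abs_le_mul_exp (h : IsDampedTrajectory a f w v) (ha : 0 ≤ a)
    (hF : ∀ x, HasDerivAt F (f x) x) (hK : ∀ x, x ^ 2 ≤ F x + K) :
    ∃ C, ∀ t ≤ 0, |w t| ≤ C * Real.exp (-a * t) := by
  refine ⟨√(energy F w v 0 + K), fun t ht => ?_⟩
  have hmono := h.monotone_energy_add_mul_exp ha hF (fun x => (sq_nonneg x).trans (hK x)) ht
  simp only [mul_zero, Real.exp_zero, mul_one] at hmono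
  have hsq : (|w t| * Real.exp (a * t)) ^ 2 ≤ energy F w v 0 + K := by
    calc (|w t| * Real.exp (a * t)) ^ 2 = w t ^ 2 * Real.exp (2 * a * t) := by
          rw [mul_pow, sq_abs, ← Real.exp_nat_mul]
          push_cast
          ring_nf
      _ ≤ (energy F w v t + K) * Real.exp (2 * a * t) := by
          gcongr
          linarith [sq_add_sq_le_energy (w := w) (v := v) hK t, sq_nonneg (v t)]
      _ ≤ energy F w v 0 + K := hmono
  rw [neg_mul, Real.exp_neg, ← div_eq_mul_inv, le_div_iff₀ (Real.exp_pos _)]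
  exact Real.le_sqrt_of_sq_le hsq

theorem isBounded_image_Ici (h : IsDampedTrajectory a f w v) (ha : 0 ≤ a)
    (hF : ∀ x, HasDerivAt F (f x) x) (hK : ∀ x, x ^ 2 ≤ F x + K) :
    IsBounded ((fun t => (w t, v t)) '' Ici 0) := by
  refine isBounded_iff_forall_norm_le.2 ⟨√(2 * (energy F w v 0 + K)), ?_⟩
  rintro _ ⟨t, ht, rfl⟩
  have hdecr := h.antitone_energy ha hF ht
  have hsum := sq_add_sq_le_energy (w := w) (v := v) hK t
  refine norm_prod_le_iff.2 ⟨Real.abs_le_sqrt ?_, Real.abs_le_sqrt ?_⟩ <;>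
    dsimp only <;> linarith [sq_nonneg (w t), sq_nonneg (v t)]

theorem uniformContinuousOn_comp (h : IsDampedTrajectory a f w v) (hf : Continuous f)
    (hbdd : IsBounded ((fun t => (w t, v t)) '' Ici 0)) {H : ℝ × ℝ → ℝ} (hH : Continuous H) :
    UniformContinuousOn (fun t => H (w t, v t)) (Ici 0) := by
  refine uniformContinuousOn_comp_of_hasDerivWithinAt_autonomous
    (X := fun p => (p.2, -a * p.2 - f p.1)) (convex_Ici 0) hbdd.isCompact_closure ?_
    hH.continuousOn (fun t _ => ?_) fun t ht => subset_closure (mem_image_of_mem _ ht)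
  · fun_prop
  · exact ((h.hasDerivAt_pos t).prodMk (h.hasDerivAt_vel t)).hasDerivWithinAt

theorem tendsto_vel_zero (h : IsDampedTrajectory a f w v) (ha : 0 < a) (hf : Continuous f)
    (hF : ∀ x, HasDerivAt F (f x) x) (hK : ∀ x, x ^ 2 ≤ F x + K) :
    Tendsto v atTop (𝓝 0) := by
  have hbelow : BddBelow (range (energy F w v)) := by
    refine ⟨-K, forall_mem_range.2 fun t => ?_⟩
    linarith [sq_add_sq_le_energy (w := w) (v := v) hK t, sq_nonneg (w t), sq_nonneg (v t)]
  have hdissipation : Tendsto (fun t => -a * v t ^ 2) atTop (𝓝 0) :=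
    tendsto_deriv_zero_of_uniformContinuousOn (fun t _ => h.hasDerivAt_energy hF t)
      (tendsto_atTop_ciInf (h.antitone_energy ha.le hF) hbelow)
      (h.uniformContinuousOn_comp hf (h.isBounded_image_Ici ha.le hF hK)
        (H := fun p => -a * p.2 ^ 2) (by fun_prop))
  have hsq : Tendsto (fun t => v t ^ 2) atTop (𝓝 0) := by
    simpa [ha.ne'] using hdissipation.const_mul (-a)⁻¹
  refine (tendsto_zero_iff_abs_tendsto_zero v).2 ?_
  simpa [Real.sqrt_sq_eq_abs, Function.comp_def] using (Real.continuous_sqrt.tendsto 0).comp hsq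

theorem exists_tendsto (h : IsDampedTrajectory a f w v) (ha : 0 < a) (hf : Continuous f)
    (hF : ∀ x, HasDerivAt F (f x) x) (hK : ∀ x, x ^ 2 ≤ F x + K)
    (hfin : {x | f x = 0}.Finite) :
    ∃ l, f l = 0 ∧ Tendsto w atTop (𝓝 l) ∧ Tendsto v atTop (𝓝 0) := by
  have hv := h.tendsto_vel_zero ha hf hF hK
  have hbdd := h.isBounded_image_Ici ha.le hF hK
  have hacc : Tendsto (fun t => -a * v t - f (w t)) atTop (𝓝 0) :=
    tendsto_deriv_zero_of_uniformContinuousOn (fun t _ => h.hasDerivAt_vel t) hv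
      (h.uniformContinuousOn_comp hf hbdd (H := fun p => -a * p.2 - f p.1) (by fun_prop))
  have hforce : Tendsto (f ∘ w) atTop (𝓝 0) := by
    simpa [Function.comp_def] using (hv.const_mul (-a)).sub hacc
  obtain ⟨R, hR⟩ := isBounded_iff_forall_norm_le.1 hbdd
  have hwR : IsBoundedUnder (· ≤ ·) atTop fun t => |w t| :=
    isBoundedUnder_of_eventually_le ((eventually_ge_atTop 0).mono fun t ht =>
      (norm_prod_le_iff.1 (hR _ (mem_image_of_mem _ ht))).1)
  obtain ⟨hle, hge⟩ := isBoundedUnder_le_abs.1 hwR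
  obtain ⟨l, hl, hwl⟩ := exists_tendsto_of_tendsto_comp_of_finite
    (continuous_iff_continuousAt.2 fun t => (h.hasDerivAt_pos t).continuousAt)
    hle hge hf hforce hfin
  exact ⟨l, hl, hwl, hv⟩

end IsDampedTrajectory

section LinearEquation

variable {c k γ μ : ℝ} {y g P Q : ℝ → ℝ}

theorem hasDerivAt_exp_neg_mul_mul (hy : ∀ t, HasDerivAt y (c * y t - g t) t) (t : ℝ) :
    HasDerivAt (fun t => Real.exp (-c * t) * y t) (-(Real.exp (-c * t) * g t)) t :=
  ((hasDerivAt_exp_mul_left (-c) t).mul (hy t)).congr_deriv (by ring)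

theorem isBigO_exp_of_isLittleO (hy : ∀ t, HasDerivAt y (c * y t - g t) t)
    (hg : g =o[atTop] y) (hck : c < k) : y =O[atTop] fun t => Real.exp (k * t) := by
  obtain ⟨T, hT⟩ := eventually_atTop.1 (hg.bound (sub_pos.2 hck))
  have hderiv := hasDerivAt_exp_neg_mul_mul hy
  set z := fun t => Real.exp (-c * t) * y t with hz
  have hgronwall : ∀ t ≥ T, ‖z t‖ ≤ ‖z T‖ * Real.exp ((k - c) * (t - T)) := fun t ht => by
    rw [← gronwallBound_ε0]
    refine norm_le_gronwallBound_of_norm_deriv_right_le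
      (fun s _ => (hderiv s).continuousAt.continuousWithinAt)
      (fun s _ => (hderiv s).hasDerivWithinAt) le_rfl (fun s hs => ?_) t (right_mem_Icc.2 ht)
    rw [norm_neg, norm_mul, hz, norm_mul, add_zero, mul_left_comm]
    gcongr
    exact hT s hs.1
  refine IsBigO.of_bound (‖z T‖ * Real.exp (-(k - c) * T)) ?_
  filter_upwards [eventually_ge_atTop T] with t ht
  calc ‖y t‖ = Real.exp (c * t) * ‖z t‖ := by
        rw [hz, norm_mul, Real.norm_of_nonneg (Real.exp_pos _).le, ← mul_assoc, ← Real.exp_add]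
        simp
    _ ≤ Real.exp (c * t) * (‖z T‖ * Real.exp ((k - c) * (t - T))) := by
        gcongr
        exact hgronwall t ht
    _ = ‖z T‖ * (Real.exp (c * t) * Real.exp ((k - c) * (t - T))) := by ring
    _ = ‖z T‖ * Real.exp (-(k - c) * T) * ‖Real.exp (k * t)‖ := by
        rw [Real.norm_of_nonneg (Real.exp_pos _).le, mul_assoc, ← Real.exp_add, ← Real.exp_add]
        ring_nf

theorem exists_tendsto_exp_neg_mul_mul (hy : ∀ t, HasDerivAt y (c * y t - g t) t)
    (hgc : Continuous g) (hkc : k < c) (hg : g =O[atTop] fun t => Real.exp (k * t)) :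
    ∃ L, Tendsto (fun t => Real.exp (-c * t) * y t) atTop (𝓝 L) := by
  refine ⟨_, MeasureTheory.tendsto_limUnder_of_hasDerivAt_of_integrableOn_Ioi
    (fun t _ => hasDerivAt_exp_neg_mul_mul hy t) (a := 0)
    (integrable_of_isBigO_exp_neg (sub_pos.2 hkc) (by fun_prop) ?_)⟩
  refine (((isBigO_refl (fun t => Real.exp (-c * t)) atTop).mul hg).neg_left).congr_right
    fun t => ?_
  rw [← Real.exp_add]
  ring_nf

theorem tendsto_exp_neg_mul_mul_zero (hy : ∀ t, HasDerivAt y (c * y t - g t) t)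
    (hy0 : Tendsto (fun t => Real.exp (-c * t) * y t) atTop (𝓝 0)) (hkc : k < c)
    (hg : Tendsto (fun t => Real.exp (-k * t) * g t) atTop (𝓝 0)) :
    Tendsto (fun t => Real.exp (-k * t) * y t) atTop (𝓝 0) := by
  have hpos : 0 < c - k := sub_pos.2 hkc
  have hfactor : ∀ t, Real.exp (-c * t) = Real.exp (-k * t) * Real.exp (-(c - k) * t) := fun t => by
    rw [← Real.exp_add]
    ring_nf
  have hquot : Tendsto (fun t => -(Real.exp (-c * t) * g t) /
      (-(c - k) * Real.exp (-(c - k) * t))) atTop (𝓝 0) := by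
    have := hg.div_const (c - k)
    rw [zero_div] at this
    refine this.congr fun t => ?_
    rw [hfactor]
    field_simp
  refine (HasDerivAt.lhopital_zero_atTop
    (Eventually.of_forall (hasDerivAt_exp_neg_mul_mul hy))
    (Eventually.of_forall (hasDerivAt_exp_mul_left (-(c - k))))
    (Eventually.of_forall fun t => mul_ne_zero (neg_ne_zero.2 hpos.ne') (Real.exp_ne_zero _))
    hy0 (tendsto_exp_neg_mul_atTop hpos) hquot).congr fun t => ?_
  rw [hfactor]
  field_simp

theorem mul_sub_le_of_abs_le_min {γ μ a p q : ℝ} (hmin : 0 ≤ min γ μ)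
    (ha : |a| ≤ min γ μ / 2 * (|p| + |q|)) : a * (q - p) ≤ γ * p ^ 2 + μ * q ^ 2 :=
  calc a * (q - p) ≤ |a| * |q - p| := (le_abs_self _).trans (abs_mul _ _).le
    _ ≤ min γ μ / 2 * (|p| + |q|) * (|p| + |q|) := by
      gcongr
      rw [add_comm]
      exact abs_sub _ _
    _ = min γ μ / 2 * (|p| + |q|) ^ 2 := by ring
    _ ≤ min γ μ / 2 * (2 * (|p| ^ 2 + |q| ^ 2)) := by
      gcongr
      exact add_sq_le
    _ = min γ μ * p ^ 2 + min γ μ * q ^ 2 := by rw [sq_abs, sq_abs]; ring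
    _ ≤ γ * p ^ 2 + μ * q ^ 2 := by
      gcongr
      exacts [min_le_left _ _, min_le_right _ _]

-- `Q ^ 2 - P ^ 2` is eventually nondecreasing and tends to `0`, so it is eventually nonpositive.
theorem eventually_abs_le_abs_of_saddle (hγ : 0 < γ) (hμ : 0 < μ)
    (hP : ∀ t, HasDerivAt P (-γ * P t - g t) t) (hQ : ∀ t, HasDerivAt Q (μ * Q t - g t) t)
    (hP0 : Tendsto P atTop (𝓝 0)) (hQ0 : Tendsto Q atTop (𝓝 0))
    (hg : g =o[atTop] fun t => |P t| + |Q t|) : ∀ᶠ t in atTop, |Q t| ≤ |P t| := by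
  have hmin : 0 < min γ μ := lt_min hγ hμ
  obtain ⟨T, hT⟩ := eventually_atTop.1 (hg.bound (half_pos hmin))
  have hderiv : ∀ t, HasDerivAt (fun t => Q t ^ 2 - P t ^ 2)
      (2 * (γ * P t ^ 2 + μ * Q t ^ 2 - g t * (Q t - P t))) t := fun t => by
    refine (((hQ t).fun_pow 2).fun_sub ((hP t).fun_pow 2)).congr_deriv ?_
    push_cast
    ring
  have hperturb : ∀ t ≥ T, g t * (Q t - P t) ≤ γ * P t ^ 2 + μ * Q t ^ 2 := fun t ht =>
    mul_sub_le_of_abs_le_min hmin.le <| by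
      simpa [abs_of_nonneg (add_nonneg (abs_nonneg (P t)) (abs_nonneg (Q t)))] using hT t ht
  have hmono : MonotoneOn (fun t => Q t ^ 2 - P t ^ 2) (Ici T) :=
    monotoneOn_of_hasDerivWithinAt_nonneg (convex_Ici T)
      (fun t _ => (hderiv t).continuousAt.continuousWithinAt)
      (fun t _ => (hderiv t).hasDerivWithinAt)
      fun t ht => mul_nonneg zero_le_two (sub_nonneg.2 (hperturb t (interior_subset ht)))
  have hlim : Tendsto (fun t => Q t ^ 2 - P t ^ 2) atTop (𝓝 0) := by
    simpa using (hQ0.pow 2).sub (hP0.pow 2)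
  filter_upwards [eventually_ge_atTop T] with t ht
  refine sq_le_sq.1 (sub_nonpos.1 (ge_of_tendsto hlim ?_))
  filter_upwards [eventually_ge_atTop t] with s hs using hmono ht (ht.trans hs) hs

end LinearEquation

namespace IsDampedTrajectory

variable {γ μ p k : ℝ} {f w v : ℝ → ℝ}

-- `v - μ w` and `v + γ w` diagonalise the linearisation at the saddle `0`.
theorem hasDerivAt_vel_sub (h : IsDampedTrajectory (γ - μ) f w v) (t : ℝ) :
    HasDerivAt (fun t => v t - μ * w t)
      (-γ * (v t - μ * w t) - (f (w t) + γ * μ * w t)) t :=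
  ((h.hasDerivAt_vel t).fun_sub ((h.hasDerivAt_pos t).const_mul μ)).congr_deriv (by ring)

theorem hasDerivAt_vel_add (h : IsDampedTrajectory (γ - μ) f w v) (t : ℝ) :
    HasDerivAt (fun t => v t + γ * w t)
      (μ * (v t + γ * w t) - (f (w t) + γ * μ * w t)) t :=
  ((h.hasDerivAt_vel t).fun_add ((h.hasDerivAt_pos t).const_mul γ)).congr_deriv (by ring)

theorem isBigO_exp_of_tendsto_zero (h : IsDampedTrajectory (γ - μ) f w v) (hγ : 0 < γ)
    (hμ : 0 < μ) (hf : (fun x => f x + γ * μ * x) =o[𝓝 0] fun x => x)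
    (hw : Tendsto w atTop (𝓝 0)) (hv : Tendsto v atTop (𝓝 0)) (hk : k < γ) :
    w =O[atTop] fun t => Real.exp (-k * t) := by
  have hP0 : Tendsto (fun t => v t - μ * w t) atTop (𝓝 0) := by
    simpa using hv.sub (hw.const_mul μ)
  have hQ0 : Tendsto (fun t => v t + γ * w t) atTop (𝓝 0) := by
    simpa using hv.add (hw.const_mul γ)
  have hnonlin : (fun t => f (w t) + γ * μ * w t) =o[atTop] w := hf.comp_tendsto hw
  have hwle : ∀ t, |w t| ≤ (γ + μ)⁻¹ * (|v t - μ * w t| + |v t + γ * w t|) := fun t => by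
    rw [inv_mul_eq_div, le_div_iff₀' (by positivity), ← abs_of_pos (add_pos hγ hμ), ← abs_mul]
    calc |(γ + μ) * w t| = |(v t + γ * w t) - (v t - μ * w t)| := by ring_nf
      _ ≤ _ := (abs_sub _ _).trans (add_comm _ _).le
  have hwPQ : w =O[atTop] fun t => |v t - μ * w t| + |v t + γ * w t| :=
    IsBigO.of_bound _ (Eventually.of_forall fun t =>
      (hwle t).trans (by gcongr; exact le_abs_self _))
  have hQP := eventually_abs_le_abs_of_saddle hγ hμ h.hasDerivAt_vel_sub h.hasDerivAt_vel_add
    hP0 hQ0 (hnonlin.trans_isBigO hwPQ)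
  have hwP : w =O[atTop] fun t => v t - μ * w t := by
    refine IsBigO.of_bound ((γ + μ)⁻¹ * 2) ?_
    filter_upwards [hQP] with t ht
    refine (hwle t).trans ?_
    rw [mul_assoc, two_mul, Real.norm_eq_abs]
    gcongr
  exact hwP.trans (isBigO_exp_of_isLittleO h.hasDerivAt_vel_sub (hnonlin.trans_isBigO hwP)
    (neg_lt_neg hk))

theorem isBigO_exp_nonlinearity (h : IsDampedTrajectory (γ - μ) f w v) (hγ : 0 < γ)
    (hμ : 0 < μ) (hp : 1 < p) (hf : (fun x => f x + γ * μ * x) =O[𝓝 0] fun x => |x| ^ p)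
    (hw : Tendsto w atTop (𝓝 0)) (hv : Tendsto v atTop (𝓝 0)) (hk : k < p * γ) :
    (fun t => f (w t) + γ * μ * w t) =O[atTop] fun t => Real.exp (-k * t) := by
  have hp0 : 0 < p := one_pos.trans hp
  have hsuper : (fun x : ℝ => |x| ^ p) =o[𝓝 0] fun x => x := by
    have hzero : Tendsto (fun x : ℝ => |x| ^ (p - 1)) (𝓝 0) (𝓝 0) := by
      have := (continuous_abs.tendsto (0 : ℝ)).rpow_const (p := p - 1) (Or.inr (by linarith))
      simpa [Real.zero_rpow (sub_pos.2 hp).ne'] using this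
    have := ((isLittleO_one_iff ℝ).2 hzero).mul_isBigO
      (isBigO_refl (fun x : ℝ => |x|) (𝓝 0))
    simp only [one_mul] at this
    refine (this.congr_left fun x => ?_).of_abs_right
    rw [← Real.rpow_add_one' (abs_nonneg x) (by simpa using hp0.ne'), sub_add_cancel]
  have hwk : w =O[atTop] fun t => Real.exp (-(k / p) * t) :=
    h.isBigO_exp_of_tendsto_zero hγ hμ (hf.trans_isLittleO hsuper) hw hv
      ((div_lt_iff₀' hp0).2 hk)
  refine (hf.comp_tendsto hw).trans ((hwk.abs_left.rpow hp0.le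
    (Eventually.of_forall fun t => (Real.exp_pos _).le)).congr_right fun t => ?_)
  rw [← Real.exp_mul]
  field_simp

theorem tendsto_exp_mul_vel_add (h : IsDampedTrajectory (γ - μ) f w v) (hγ : 0 < γ)
    (hμ : 0 < μ) (hp : 1 < p) (hf : (fun x => f x + γ * μ * x) =O[𝓝 0] fun x => |x| ^ p)
    (hw : Tendsto w atTop (𝓝 0)) (hv : Tendsto v atTop (𝓝 0)) (hμk : -μ < k) (hk : k < p * γ) :
    Tendsto (fun t => Real.exp (k * t) * (v t + γ * w t)) atTop (𝓝 0) := by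
  obtain ⟨k', hkk', hk'⟩ := exists_between hk
  have hnonlin : Tendsto (fun t => Real.exp (k * t) * (f (w t) + γ * μ * w t)) atTop (𝓝 0) := by
    refine ((isBigO_refl (fun t => Real.exp (k * t)) atTop).mul
      (h.isBigO_exp_nonlinearity hγ hμ hp hf hw hv hk')).trans_tendsto ?_
    refine (tendsto_exp_neg_mul_atTop (sub_pos.2 hkk')).congr fun t => ?_
    rw [← Real.exp_add]
    ring_nf
  have hQ : Tendsto (fun t => Real.exp (-μ * t) * (v t + γ * w t)) atTop (𝓝 0) := by
    simpa using (tendsto_exp_neg_mul_atTop hμ).mul (hv.add (hw.const_mul γ))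
  simpa using tendsto_exp_neg_mul_mul_zero h.hasDerivAt_vel_add hQ (neg_lt.1 hμk)
    (by simpa using hnonlin)

theorem exists_tendsto_exp_mul (h : IsDampedTrajectory (γ - μ) f w v) (hγ : 0 < γ)
    (hμ : 0 < μ) (hp : 1 < p) (hfc : Continuous f)
    (hf : (fun x => f x + γ * μ * x) =O[𝓝 0] fun x => |x| ^ p)
    (hw : Tendsto w atTop (𝓝 0)) (hv : Tendsto v atTop (𝓝 0)) :
    ∃ L, Tendsto (fun t => Real.exp (γ * t) * w t) atTop (𝓝 L) := by
  have hγp : γ < p * γ := lt_mul_of_one_lt_left hγ hp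
  have hwc : Continuous w :=
    continuous_iff_continuousAt.2 fun t => (h.hasDerivAt_pos t).continuousAt
  obtain ⟨k, hγk, hk⟩ := exists_between hγp
  obtain ⟨L, hL⟩ := exists_tendsto_exp_neg_mul_mul h.hasDerivAt_vel_sub (by fun_prop)
    (neg_lt_neg hγk) (h.isBigO_exp_nonlinearity hγ hμ hp hf hw hv hk)
  rw [neg_neg] at hL
  have hQ := h.tendsto_exp_mul_vel_add hγ hμ hp hf hw hv (by linarith) hγp
  refine ⟨(0 - L) / (γ + μ), ((hQ.sub hL).div_const (γ + μ)).congr fun t => ?_⟩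
  field_simp
  ring

end IsDampedTrajectory

section DoubleWell

/-- The nonlinearity of the transformed equation, with wells at `± β ^ (1 / α)` when `β > 0`. -/
noncomputable def doubleWellForce (α β x : ℝ) : ℝ := |x| ^ α * x - β * x

/-- The primitive of `doubleWellForce α β` that vanishes at `0`, the potential in the energy. -/
noncomputable def doubleWellPotential (α β x : ℝ) : ℝ := |x| ^ (α + 2) / (α + 2) - β * x ^ 2 / 2

variable {α : ℝ}

theorem continuous_doubleWellForce (hα : 0 ≤ α) (β : ℝ) : Continuous (doubleWellForce α β) := by
  have : Continuous fun x : ℝ => |x| ^ α := continuous_abs.rpow_const fun _ => Or.inr hα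
  unfold doubleWellForce
  fun_prop

theorem hasDerivAt_doubleWellPotential (hα : 0 < α) (β x : ℝ) :
    HasDerivAt (doubleWellPotential α β) (doubleWellForce α β x) x := by
  have hpow := (hasDerivAt_abs_rpow x (p := α + 2) (by linarith)).div_const (α + 2)
  refine (hpow.sub (((hasDerivAt_pow 2 x).const_mul β).div_const 2)).congr_deriv ?_
  rw [doubleWellForce, add_sub_cancel_right]
  field_simp
  norm_num
  ring

theorem exists_sq_le_doubleWellPotential_add (hα : 0 < α) (β : ℝ) :
    ∃ K, ∀ x, x ^ 2 ≤ doubleWellPotential α β x + K := by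
  have hcont : Continuous fun x => doubleWellPotential α β x - x ^ 2 :=
    (continuous_iff_continuousAt.2 fun x =>
      (hasDerivAt_doubleWellPotential hα β x).continuousAt).sub (continuous_pow 2)
  have hfactor : ∀ x : ℝ, |x| ^ 2 * (|x| ^ α / (α + 2) - (β / 2 + 1)) =
      doubleWellPotential α β x - x ^ 2 := fun x => by
    rw [doubleWellPotential, Real.rpow_add_of_nonneg (abs_nonneg x) hα.le zero_le_two,
      Real.rpow_two, sq_abs]
    ring
  have habs : Tendsto (fun x : ℝ => |x|) (cocompact ℝ) atTop := tendsto_norm_cocompact_atTop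
  have hcoercive : Tendsto (fun x => doubleWellPotential α β x - x ^ 2) (cocompact ℝ) atTop := by
    refine Tendsto.congr hfactor (((tendsto_pow_atTop two_ne_zero).comp habs).atTop_mul_atTop₀ ?_)
    exact tendsto_atTop_add_const_right _ _
      (((tendsto_rpow_atTop hα).comp habs).atTop_div_const (by positivity))
  obtain ⟨x₀, hx₀⟩ := hcont.exists_forall_le hcoercive
  exact ⟨-(doubleWellPotential α β x₀ - x₀ ^ 2), fun x => by linarith [hx₀ x]⟩

theorem eq_zero_or_eq_of_doubleWellForce_eq_zero {β x : ℝ} (hα : α ≠ 0)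
    (hx : doubleWellForce α β x = 0) :
    x = 0 ∨ ∃ ε : ℝ, (ε = 1 ∨ ε = -1) ∧ x = ε * β ^ (1 / α) := by
  rw [doubleWellForce, ← sub_mul, mul_eq_zero, sub_eq_zero] at hx
  refine hx.symm.imp_right fun hpow => ?_
  have habs : |x| = β ^ (1 / α) := by
    rw [← hpow, ← Real.rpow_mul (abs_nonneg x), mul_one_div_cancel hα, Real.rpow_one]
  rcases eq_or_eq_neg_of_abs_eq habs with h | h
  · exact ⟨1, Or.inl rfl, by rw [h, one_mul]⟩
  · exact ⟨-1, Or.inr rfl, by rw [h, neg_one_mul]⟩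

theorem finite_setOf_doubleWellForce_eq_zero (hα : α ≠ 0) (β : ℝ) :
    {x | doubleWellForce α β x = 0}.Finite := by
  refine (toFinite {0, 1 * β ^ (1 / α), -1 * β ^ (1 / α)}).subset fun x hx => ?_
  rcases eq_zero_or_eq_of_doubleWellForce_eq_zero hα hx with h | ⟨ε, rfl | rfl, h⟩ <;> simp [h]

theorem doubleWellForce_add_mul_isBigO (hα : α + 1 ≠ 0) (β : ℝ) (l : Filter ℝ) :
    (fun x => doubleWellForce α β x + β * x) =O[l] fun x => |x| ^ (α + 1) := by
  refine IsBigO.of_norm_eventuallyLE (Eventually.of_forall fun x => ?_)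
  simp only [doubleWellForce]
  rw [sub_add_cancel, norm_mul, Real.rpow_add_one' (abs_nonneg x) hα,
    Real.norm_of_nonneg (by positivity), Real.norm_eq_abs]

end DoubleWell

section EmdenFowler

/-- The Emden–Fowler transform `r ^ γ * u r` in the logarithmic time `t = -log r`, so that `r → 0`
corresponds to `t → +∞`. -/
noncomputable def emdenFowler (γ : ℝ) (u : ℝ → ℝ) (t : ℝ) : ℝ :=
  Real.exp (-γ * t) * u (Real.exp (-t))

/-- The time derivative of `emdenFowler γ u`, where `u'` stands for the derivative of `u`. -/
noncomputable def emdenFowlerVel (γ : ℝ) (u u' : ℝ → ℝ) (t : ℝ) : ℝ :=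
  -γ * emdenFowler γ u t - emdenFowler (γ + 1) u' t

variable {α γ μ : ℝ} {u u' : ℝ → ℝ}

theorem tendsto_comp_exp_neg_atTop {X : Type*} {f : ℝ → X} {l : Filter X} :
    Tendsto (fun t => f (Real.exp (-t))) atTop l ↔ Tendsto f (𝓝[>] 0) l :=
  (tendsto_comp_neg_atTop_iff (f := fun t => f (Real.exp t))).trans Real.tendsto_comp_exp_atBot

theorem tendsto_emdenFowler_atTop_iff {l : Filter ℝ} :
    Tendsto (emdenFowler γ u) atTop l ↔ Tendsto (fun r => r ^ γ * u r) (𝓝[>] 0) l := by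
  rw [← tendsto_comp_exp_neg_atTop]
  refine tendsto_congr fun t => ?_
  rw [emdenFowler, ← Real.exp_mul, mul_comm (-t), neg_mul_comm]

theorem exp_mul_emdenFowler (γ : ℝ) (u : ℝ → ℝ) (t : ℝ) :
    Real.exp (γ * t) * emdenFowler γ u t = u (Real.exp (-t)) := by
  rw [emdenFowler, ← mul_assoc, ← Real.exp_add]
  simp

theorem abs_emdenFowler_rpow_mul (hγ : α * γ = 2) (u : ℝ → ℝ) (t : ℝ) :
    |emdenFowler γ u t| ^ α * emdenFowler γ u t =
      emdenFowler (γ + 2) (fun r => |u r| ^ α * u r) t := by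
  have hexp : Real.exp (-(γ + 2) * t) = Real.exp (-γ * t * α) * Real.exp (-γ * t) := by
    rw [← Real.exp_add, ← hγ]
    ring_nf
  simp only [emdenFowler]
  rw [abs_mul, Real.abs_exp, Real.mul_rpow (Real.exp_pos _).le (abs_nonneg _), ← Real.exp_mul, hexp]
  ring

theorem hasDerivAt_emdenFowler (γ : ℝ) {t : ℝ}
    (hu : HasDerivAt u (u' (Real.exp (-t))) (Real.exp (-t))) :
    HasDerivAt (emdenFowler γ u) (emdenFowlerVel γ u u' t) t := by
  have hexp : Real.exp (-(γ + 1) * t) = Real.exp (-γ * t) * Real.exp (-t) := by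
    rw [← Real.exp_add]
    ring_nf
  refine ((hasDerivAt_exp_mul_left (-γ) t).mul
    (hu.comp t (hasDerivAt_neg t).exp)).congr_deriv ?_
  rw [emdenFowlerVel, emdenFowler, emdenFowler, hexp, Function.comp_apply]
  ring

theorem isDampedTrajectory_emdenFowler (hγ : α * γ = 2)
    (hu : ∀ r > 0, HasDerivAt u (u' r) r)
    (hu' : ∀ r > 0, HasDerivAt u' (-((γ + μ + 1) / r * u' r) - |u r| ^ α * u r) r) :
    IsDampedTrajectory (γ - μ) (doubleWellForce α (γ * μ)) (emdenFowler γ u)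
      (emdenFowlerVel γ u u') where
  hasDerivAt_pos t := hasDerivAt_emdenFowler γ (hu _ (Real.exp_pos _))
  hasDerivAt_vel t := by
    have hw := hasDerivAt_emdenFowler γ (hu _ (Real.exp_pos (-t)))
    have hz := hasDerivAt_emdenFowler (γ + 1)
      (u' := fun r => -((γ + μ + 1) / r * u' r) - |u r| ^ α * u r) (hu' _ (Real.exp_pos (-t)))
    refine ((hw.const_mul (-γ)).sub hz).congr_deriv ?_
    have hexp : Real.exp (-(γ + 2) * t) = Real.exp (-(γ + 1) * t) * Real.exp (-t) := by
      rw [← Real.exp_add]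
      ring_nf
    rw [doubleWellForce, abs_emdenFowler_rpow_mul hγ]
    simp only [emdenFowlerVel, emdenFowler, add_assoc, one_add_one_eq_two, hexp]
    field_simp
    ring

theorem abs_le_mul_rpow_of_abs_emdenFowler_le {a C : ℝ}
    (h : ∀ t ≤ 0, |emdenFowler γ u t| ≤ C * Real.exp (-a * t)) {r : ℝ} (hr : 1 ≤ r) :
    |u r| ≤ C * r ^ (a - γ) := by
  have hr0 : 0 < r := one_pos.trans_le hr
  have hexp : Real.exp (-(-Real.log r)) = r := by rw [neg_neg, Real.exp_log hr0]
  calc |u r| = Real.exp (γ * -Real.log r) * |emdenFowler γ u (-Real.log r)| := by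
        rw [← Real.abs_exp (γ * _), ← abs_mul, exp_mul_emdenFowler, hexp]
    _ ≤ Real.exp (γ * -Real.log r) * (C * Real.exp (-a * -Real.log r)) := by
        gcongr
        exact h _ (neg_nonpos.2 (Real.log_nonneg hr))
    _ = C * r ^ (a - γ) := by
        rw [Real.rpow_def_of_pos hr0, mul_left_comm, ← Real.exp_add]
        ring_nf

theorem emdenFowlerVel_add_mul (γ : ℝ) (u u' : ℝ → ℝ) (t : ℝ) :
    emdenFowlerVel γ u u' t + γ * emdenFowler γ u t = -emdenFowler (γ + 1) u' t := by
  rw [emdenFowlerVel]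
  ring

theorem tendsto_rpow_mul_of_tendsto_emdenFowler {l : ℝ}
    (hw : Tendsto (emdenFowler γ u) atTop (𝓝 l))
    (hv : Tendsto (emdenFowlerVel γ u u') atTop (𝓝 0)) :
    Tendsto (fun r => r ^ γ * u r) (𝓝[>] 0) (𝓝 l) ∧
      Tendsto (fun r => r ^ (γ + 1) * u' r) (𝓝[>] 0) (𝓝 (-γ * l)) := by
  refine ⟨tendsto_emdenFowler_atTop_iff.1 hw, tendsto_emdenFowler_atTop_iff.1 ?_⟩
  simpa [emdenFowlerVel_add_mul] using (hv.add (hw.const_mul γ)).neg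

theorem regular_of_tendsto_emdenFowler_zero (hα : 0 < α) (hμ : 0 < μ) (hγ : α * γ = 2)
    (h : IsDampedTrajectory (γ - μ) (doubleWellForce α (γ * μ)) (emdenFowler γ u)
      (emdenFowlerVel γ u u'))
    (hw : Tendsto (emdenFowler γ u) atTop (𝓝 0))
    (hv : Tendsto (emdenFowlerVel γ u u') atTop (𝓝 0)) :
    (∃ L, Tendsto u (𝓝[>] 0) (𝓝 L)) ∧ Tendsto u' (𝓝[>] 0) (𝓝 0) := by
  have hγ0 : 0 < γ := pos_of_mul_pos_right (hγ ▸ two_pos) hα.le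
  have hp : 1 < α + 1 := by linarith
  have hO := doubleWellForce_add_mul_isBigO (by positivity : α + 1 ≠ 0) (γ * μ) (𝓝 0)
  obtain ⟨L, hL⟩ := h.exists_tendsto_exp_mul hγ0 hμ hp
    (continuous_doubleWellForce hα.le _) hO hw hv
  have hQ := h.tendsto_exp_mul_vel_add hγ0 hμ hp hO hw hv (k := γ + 1) (by linarith) (by linarith)
  simp only [exp_mul_emdenFowler] at hL
  simp only [emdenFowlerVel_add_mul, mul_neg, exp_mul_emdenFowler] at hQ
  exact ⟨⟨L, tendsto_comp_exp_neg_atTop.1 hL⟩,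
    tendsto_comp_exp_neg_atTop.1 (by simpa using hQ.neg)⟩

end EmdenFowler

theorem hasDerivAt_and_hasDerivAt_deriv_of_contDiffOn_two {u : ℝ → ℝ} {s : Set ℝ} (hs : IsOpen s)
    (hu : ContDiffOn ℝ 2 u s) {r : ℝ} (hr : r ∈ s) :
    HasDerivAt u (deriv u r) r ∧ HasDerivAt (deriv u) (deriv (deriv u) r) r := by
  have hu' : ContDiffOn ℝ 1 (deriv u) s := hu.deriv_of_isOpen hs (by norm_num)
  exact ⟨((hu.contDiffAt (hs.mem_nhds hr)).differentiableAt (by norm_num)).hasDerivAt,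
    ((hu'.contDiffAt (hs.mem_nhds hr)).differentiableAt (by norm_num)).hasDerivAt⟩

theorem exponent_bounds {d α : ℝ} (hα1 : 2 / (d - 2) < α) (hα2 : α < 4 / (d - 2)) :
    0 < α ∧ 0 < d - 2 - 2 / α ∧ d - 2 - 2 / α < 2 / α := by
  have hd : 0 < d - 2 := by
    have hpos : 0 < 2 / (d - 2) := by
      linarith [show 4 / (d - 2) = 2 / (d - 2) + 2 / (d - 2) by ring]
    exact (div_pos_iff_of_pos_left two_pos).1 hpos
  have hα : 0 < α := (by positivity : 0 < 2 / (d - 2)).trans hα1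
  have hlow : 2 / α < d - 2 := (div_lt_comm₀ hα hd).2 hα1
  have hupp : d - 2 < 4 / α := (lt_div_comm₀ hα hd).1 hα2
  exact ⟨hα, by linarith, by linarith [show 4 / α = 2 / α + 2 / α by ring]⟩

theorem stmt_13_general (d α β : ℝ) (hα1 : 2 / (d - 2) < α) (hα2 : α < 4 / (d - 2))
    (hβ : β = 2 / α * (d - 2 - 2 / α)) (u : ℝ → ℝ) (huC2 : ContDiffOn ℝ 2 u (Ioi 0))
    (huode : ∀ r, 0 < r → deriv (deriv u) r + (d - 1) / r * deriv u r + |u r| ^ α * u r = 0) :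
    (∃ C, ∀ r, 1 < r → |u r| ≤ C * r ^ (-(d - 2 - 2 / α))) ∧
    (((∃ L, Tendsto u (𝓝[>] 0) (𝓝 L)) ∧ Tendsto (deriv u) (𝓝[>] 0) (𝓝 0)) ∨
      (∃ ε : ℝ, (ε = 1 ∨ ε = -1) ∧
        Tendsto (fun r => r ^ (2 / α) * u r) (𝓝[>] 0) (𝓝 (ε * β ^ (1 / α))) ∧
        Tendsto (fun r => r ^ (2 / α + 1) * deriv u r) (𝓝[>] 0)
          (𝓝 (-ε * (2 / α) * β ^ (1 / α))))) := by
  obtain ⟨hα, hμ, hμγ⟩ := exponent_bounds hα1 hα2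
  have hγ : α * (2 / α) = 2 := mul_div_cancel₀ 2 hα.ne'
  have hdim : 2 / α + (d - 2 - 2 / α) + 1 = d - 1 := by ring
  have hderiv := fun r (hr : 0 < r) =>
    hasDerivAt_and_hasDerivAt_deriv_of_contDiffOn_two isOpen_Ioi huC2 (mem_Ioi.2 hr)
  have htraj := isDampedTrajectory_emdenFowler hγ (fun r hr => (hderiv r hr).1) fun r hr =>
    (hderiv r hr).2.congr_deriv (by rw [hdim]; linarith [huode r hr])
  rw [← hβ] at htraj
  have ha := sub_pos.2 hμγ
  have hF := hasDerivAt_doubleWellPotential hα β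
  obtain ⟨K, hK⟩ := exists_sq_le_doubleWellPotential_add hα β
  constructor
  · obtain ⟨C, hC⟩ := htraj.exists_abs_le_mul_exp ha.le hF hK
    exact ⟨C, fun r hr => by simpa using abs_le_mul_rpow_of_abs_emdenFowler_le hC hr.le⟩
  · obtain ⟨l, hl, hw, hv⟩ := htraj.exists_tendsto ha (continuous_doubleWellForce hα.le β) hF hK
      (finite_setOf_doubleWellForce_eq_zero hα.ne' β)
    rcases eq_zero_or_eq_of_doubleWellForce_eq_zero hα.ne' hl with rfl | ⟨ε, hε, rfl⟩
    · exact Or.inl (regular_of_tendsto_emdenFowler_zero hα hμ hγ (hβ ▸ htraj) hw hv)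
    · obtain ⟨hu0, hu'0⟩ := tendsto_rpow_mul_of_tendsto_emdenFowler hw hv
      exact Or.inr ⟨ε, hε, hu0, by convert hu'0 using 2; ring⟩

theorem stmt_13 (N : ℕ) (hN : 3 ≤ N) (α β : ℝ)
    (hα1 : 2 / ((N : ℝ) - 2) < α) (hα2 : α < 4 / ((N : ℝ) - 2))
    (hβ : β = 2 / α * ((N : ℝ) - 2 - 2 / α))
    (u : ℝ → ℝ) (huC2 : ContDiffOn ℝ 2 u (Set.Ioi 0))
    (hune : ∃ r : ℝ, 0 < r ∧ u r ≠ 0)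
    (huode : ∀ r : ℝ, 0 < r →
      deriv (deriv u) r + (((N : ℝ) - 1) / r) * deriv u r + |u r| ^ α * u r = 0) :
    -- (1) |u(r)| ≤ C r^{-(N-2-2/α)} for r > 1
    (∃ C : ℝ, ∀ r : ℝ, 1 < r → |u r| ≤ C * r ^ (-((N : ℝ) - 2 - 2 / α))) ∧
    -- (2) dichotomy as r → 0
    (((∃ L : ℝ, Tendsto u (nhdsWithin 0 (Set.Ioi 0)) (nhds L)) ∧
        Tendsto (deriv u) (nhdsWithin 0 (Set.Ioi 0)) (nhds 0)) ∨
      (∃ ε : ℝ, (ε = 1 ∨ ε = -1) ∧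
        Tendsto (fun r : ℝ => r ^ (2 / α) * u r)
          (nhdsWithin 0 (Set.Ioi 0)) (nhds (ε * β ^ (1 / α))) ∧
        Tendsto (fun r : ℝ => r ^ (2 / α + 1) * deriv u r)
          (nhdsWithin 0 (Set.Ioi 0)) (nhds (-ε * (2 / α) * β ^ (1 / α))))) :=
  stmt_13_general N α β hα1 hα2 hβ u huC2 huode
end
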